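/- Consider the tensorized Hermite basis (h_n) of L²(ℝ³). For every δ > 0 and every s ∈ [0,1], there exists a constant C > 0 such that for all n, m, k: (i) ‖h_n h_m‖_{ℋ^s(ℝ³)} ≤ C max(λ_n, λ_m)^{s−1/2+δ}, and (ii) ‖h_n h_m h_k‖_{ℋ^s(ℝ³)} ≤ C max(λ_n, λ_m, λ_k)^{s−1/2+δ}. -/

import Mathlib

open MeasureTheory Complex Filter Set
open scoped ENNReal

noncomputable section

abbrev Rd (d : ℕ) := EuclideanSpace ℝ (Fin d)

/-- The one-dimensional Hermite function
`e_k(x) = (-1)^k (k!)^{-1/2} 2^{-k/2} π^{-1/4} e^{x²/2} (d^k/dx^k)(e^{-x²})`. -/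
def hermiteFun (k : ℕ) (x : ℝ) : ℝ :=
  (-1 : ℝ) ^ k *
    ((Nat.factorial k : ℝ) ^ (-(1/2 : ℝ)) * (2 : ℝ) ^ (-(k : ℝ)/2) *
      Real.pi ^ (-(1/4 : ℝ))) *
    Real.exp (x ^ 2 / 2) * iteratedDeriv k (fun y => Real.exp (-y ^ 2)) x

/-- The tensorized Hermite function on `ℝ³`. -/
def hermite3 (n : Fin 3 → ℕ) (x : Rd 3) : ℝ :=
  ∏ i, hermiteFun (n i) (x i)

/-- `λ_n = √(2(n₁+n₂+n₃)+3)`. -/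
def lam3 (n : Fin 3 → ℕ) : ℝ :=
  Real.sqrt (2 * (∑ i, (n i : ℝ)) + 3)

/-- The tensorized Hermite coefficient on `ℝ³`. -/
def coef3 (u : Rd 3 → ℂ) (n : Fin 3 → ℕ) : ℂ :=
  ∫ x : Rd 3, (hermite3 n x : ℂ) * u x

/-- The harmonic Sobolev norm on `ℝ³`: `‖u‖²_{ℋ^s} = Σ_n λ_n^{2s} |⟨h_n,u⟩|²`. -/
def hs3Norm (s : ℝ) (u : Rd 3 → ℂ) : ℝ≥0∞ :=
  (∑' n : Fin 3 → ℕ,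
    ENNReal.ofReal (lam3 n ^ (2 * s) * ‖coef3 u n‖ ^ 2)) ^ (1/2 : ℝ)

/-! ### Ladder relations -/

lemma hasDerivAt_iteratedDeriv_gaussian (k : ℕ) (x : ℝ) :
    HasDerivAt (iteratedDeriv k (fun y : ℝ => Real.exp (-y ^ 2)))
      (iteratedDeriv (k + 1) (fun y : ℝ => Real.exp (-y ^ 2)) x) x := by
  have h : ContDiff ℝ (k + 1 : ℕ) (fun y : ℝ => Real.exp (-y ^ 2)) := by fun_prop
  have hd : Differentiable ℝ (iteratedDeriv k (fun y : ℝ => Real.exp (-y ^ 2))) :=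
    h.differentiable_iteratedDeriv k (by exact_mod_cast Nat.lt_succ_self k)
  rw [iteratedDeriv_succ]
  exact (hd x).hasDerivAt

lemma iteratedDeriv_gaussian_one (x : ℝ) :
    iteratedDeriv 1 (fun y : ℝ => Real.exp (-y ^ 2)) x = -2 * x * Real.exp (-x ^ 2) := by
  rw [iteratedDeriv_one]
  have h : HasDerivAt (fun y : ℝ => Real.exp (-y ^ 2))
      (Real.exp (-x ^ 2) * -(((2 : ℕ) : ℝ) * x ^ (2 - 1))) x :=
    ((hasDerivAt_pow 2 x).neg).exp
  rw [h.deriv]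
  norm_num
  ring

lemma iteratedDeriv_gaussian_add_two (k : ℕ) (x : ℝ) :
    iteratedDeriv (k + 2) (fun y : ℝ => Real.exp (-y ^ 2)) x =
      -2 * x * iteratedDeriv (k + 1) (fun y : ℝ => Real.exp (-y ^ 2)) x
        - 2 * (k + 1) * iteratedDeriv k (fun y : ℝ => Real.exp (-y ^ 2)) x := by
  induction k generalizing x with
  | zero =>
    have h1 := hasDerivAt_iteratedDeriv_gaussian 1 x
    have h0 := hasDerivAt_iteratedDeriv_gaussian 0 x
    have h2 := ((hasDerivAt_id x).const_mul (-2)).mul h0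
    have he : iteratedDeriv 1 (fun y : ℝ => Real.exp (-y ^ 2)) =
        (fun y => -2 * id y) * iteratedDeriv 0 (fun y : ℝ => Real.exp (-y ^ 2)) := by
      funext y
      simp [iteratedDeriv_gaussian_one]
    rw [he] at h1
    have := h1.unique h2
    simp only [zero_add] at this ⊢
    rw [show (2 : ℕ) = 1 + 1 from rfl, this]
    simp
    ring
  | succ k ih =>
    have h3 := hasDerivAt_iteratedDeriv_gaussian (k + 2) x
    have h2 := hasDerivAt_iteratedDeriv_gaussian (k + 1) x
    have h1 := hasDerivAt_iteratedDeriv_gaussian k x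
    have h := (((hasDerivAt_id x).const_mul (-2)).mul h2).sub (h1.const_mul (2 * ((k : ℝ) + 1)))
    have he : iteratedDeriv (k + 2) (fun y : ℝ => Real.exp (-y ^ 2)) =
        (fun y => -2 * id y) * iteratedDeriv (k + 1) (fun y : ℝ => Real.exp (-y ^ 2)) -
        fun y => 2 * ((k : ℝ) + 1) * iteratedDeriv k (fun y : ℝ => Real.exp (-y ^ 2)) y := by
      funext y
      simpa using ih y
    rw [he] at h3
    have := h3.unique h
    rw [show k + 1 + 2 = k + 2 + 1 from rfl, this]
    push_cast
    simp only [id]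
    ring

/-- The normalizing constant of `hermiteFun`. -/
def hermiteConst (k : ℕ) : ℝ :=
  (-1 : ℝ) ^ k *
    ((Nat.factorial k : ℝ) ^ (-(1/2 : ℝ)) * (2 : ℝ) ^ (-(k : ℝ)/2) *
      Real.pi ^ (-(1/4 : ℝ)))

lemma hermiteConst_succ (k : ℕ) :
    Real.sqrt (2 * (k + 1)) * hermiteConst (k + 1) = -hermiteConst k := by
  have hk : (0 : ℝ) < k + 1 := by positivity
  have hf : (0 : ℝ) < Nat.factorial k := by positivity
  have e1 : ((Nat.factorial (k + 1) : ℕ) : ℝ) ^ (-(1/2 : ℝ)) =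
      (Real.sqrt (k + 1))⁻¹ * (Nat.factorial k : ℝ) ^ (-(1/2 : ℝ)) := by
    rw [Nat.factorial_succ, Nat.cast_mul, Real.mul_rpow (by positivity) hf.le,
      Real.rpow_neg (by positivity), ← Real.sqrt_eq_rpow]
    push_cast
    rfl
  have e2 : (2 : ℝ) ^ (-((k + 1 : ℕ) : ℝ) / 2) = (Real.sqrt 2)⁻¹ * (2 : ℝ) ^ (-(k : ℝ) / 2) := by
    rw [show -((k + 1 : ℕ) : ℝ) / 2 = -(1/2) + -(k : ℝ) / 2 by push_cast; ring,
      Real.rpow_add (by norm_num), Real.rpow_neg (by norm_num), ← Real.sqrt_eq_rpow]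
  have h2 : Real.sqrt 2 ≠ 0 := by positivity
  have h3 : Real.sqrt (k + 1) ≠ 0 := by positivity
  unfold hermiteConst
  rw [e1, e2, Real.sqrt_mul (by norm_num), pow_succ]
  field_simp

lemma hermiteFun_eq (k : ℕ) (x : ℝ) :
    hermiteFun k x = hermiteConst k *
      Real.exp (x ^ 2 / 2) * iteratedDeriv k (fun y => Real.exp (-y ^ 2)) x := rfl

lemma hermiteFun_zero (x : ℝ) :
    hermiteFun 0 x = Real.pi ^ (-(1/4 : ℝ)) * Real.exp (-(x ^ 2) / 2) := by
  simp only [hermiteFun_eq, hermiteConst, iteratedDeriv_zero, mul_assoc, ← Real.exp_add]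
  simp
  left
  ring

/-- Three-term recurrence. -/
lemma hermiteFun_succ (k : ℕ) (x : ℝ) :
    Real.sqrt (2 * (k + 1)) * hermiteFun (k + 1) x =
      2 * x * hermiteFun k x - Real.sqrt (2 * k) * hermiteFun (k - 1) x := by
  rw [hermiteFun_eq, ← mul_assoc, ← mul_assoc, hermiteConst_succ]
  rcases k with _ | k
  · simp [hermiteFun_eq, iteratedDeriv_gaussian_one]
    ring
  · rw [iteratedDeriv_gaussian_add_two, Nat.add_sub_cancel, hermiteFun_eq, hermiteFun_eq]
    have h := hermiteConst_succ k
    have hs : Real.sqrt (2 * ((k : ℝ) + 1)) ^ 2 = 2 * (k + 1) := Real.sq_sqrt (by positivity)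
    have h' : 2 * ((k : ℝ) + 1) * hermiteConst (k + 1) =
        -(Real.sqrt (2 * (k + 1)) * hermiteConst k) := by
      linear_combination Real.sqrt (2 * (k + 1)) * h - hermiteConst (k + 1) * hs
    push_cast
    linear_combination Real.exp (x ^ 2 / 2) *
      iteratedDeriv k (fun y => Real.exp (-y ^ 2)) x * h'

/-- The creation operator `x - d/dx`. -/
lemma hasDerivAt_hermiteFun (k : ℕ) (x : ℝ) :
    HasDerivAt (hermiteFun k)
      (x * hermiteFun k x - Real.sqrt (2 * (k + 1)) * hermiteFun (k + 1) x) x := by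
  have h1 : HasDerivAt (fun x : ℝ => Real.exp (x ^ 2 / 2)) (Real.exp (x ^ 2 / 2) * x) x := by
    have := ((hasDerivAt_pow 2 x).div_const 2).exp
    convert this using 2
    norm_num
  have h := (h1.const_mul (hermiteConst k)).mul (hasDerivAt_iteratedDeriv_gaussian k x)
  refine h.congr_deriv ?_
  rw [hermiteFun_eq, hermiteFun_eq]
  linear_combination (Real.exp (x ^ 2 / 2) *
    iteratedDeriv (k + 1) (fun y => Real.exp (-y ^ 2)) x) * hermiteConst_succ k

/-- The annihilation operator `x + d/dx`. -/
lemma hasDerivAt_hermiteFun' (k : ℕ) (x : ℝ) :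
    HasDerivAt (hermiteFun k)
      (Real.sqrt (2 * k) * hermiteFun (k - 1) x - x * hermiteFun k x) x := by
  refine (hasDerivAt_hermiteFun k x).congr_deriv ?_
  rw [hermiteFun_succ]
  ring

/-- The derivative of `hermiteFun k`. -/
def hermiteFunDeriv (k : ℕ) (x : ℝ) : ℝ :=
  Real.sqrt (k / 2) * hermiteFun (k - 1) x - Real.sqrt ((k + 1) / 2) * hermiteFun (k + 1) x

lemma sqrt_two_mul_eq (a : ℝ) : Real.sqrt (2 * a) = 2 * Real.sqrt (a / 2) := by
  rw [show 2 * a = 2 ^ 2 * (a / 2) by ring, Real.sqrt_mul (by norm_num),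
    Real.sqrt_sq (by norm_num)]

lemma hermiteFunDeriv_eq (k : ℕ) (x : ℝ) :
    hermiteFunDeriv k x = Real.sqrt (2 * k) * hermiteFun (k - 1) x - x * hermiteFun k x := by
  have h := hermiteFun_succ k x
  unfold hermiteFunDeriv
  rw [sqrt_two_mul_eq, sqrt_two_mul_eq] at *
  linarith

lemma hasDerivAt_hermiteFunDeriv (k : ℕ) (x : ℝ) :
    HasDerivAt (hermiteFun k) (hermiteFunDeriv k x) x := by
  rw [hermiteFunDeriv_eq]
  exact hasDerivAt_hermiteFun' k x

/-! ### Functions of Gaussian decay -/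

/-- Continuous functions dominated by a Gaussian. -/
def GaussianDecay (u : ℝ → ℝ) : Prop :=
  Continuous u ∧ ∃ b > 0, ∃ C, ∀ x, |u x| ≤ C * Real.exp (-b * x ^ 2)

namespace GaussianDecay

variable {u v : ℝ → ℝ}

lemma integrable (hu : GaussianDecay u) : Integrable u := by
  obtain ⟨hc, b, hb, C, h⟩ := hu
  exact ((integrable_exp_neg_mul_sq hb).const_mul C).mono' hc.aestronglyMeasurable
    (Eventually.of_forall h)

lemma const_mul (hu : GaussianDecay u) (c : ℝ) : GaussianDecay (fun x => c * u x) := by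
  obtain ⟨hc, b, hb, C, h⟩ := hu
  refine ⟨hc.const_mul c, b, hb, |c| * C, fun x => ?_⟩
  rw [abs_mul, mul_assoc]
  exact mul_le_mul_of_nonneg_left (h x) (abs_nonneg _)

lemma add (hu : GaussianDecay u) (hv : GaussianDecay v) : GaussianDecay (fun x => u x + v x) := by
  obtain ⟨hc, b, hb, C, h⟩ := hu
  obtain ⟨hc', b', hb', C', h'⟩ := hv
  refine ⟨hc.add hc', min b b', lt_min hb hb', |C| + |C'|, fun x => ?_⟩
  have e : Real.exp (-b * x ^ 2) ≤ Real.exp (-(min b b') * x ^ 2) := by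
    gcongr
    exact min_le_left _ _
  have e' : Real.exp (-b' * x ^ 2) ≤ Real.exp (-(min b b') * x ^ 2) := by
    gcongr
    exact min_le_right _ _
  calc |u x + v x| ≤ |u x| + |v x| := abs_add_le _ _
    _ ≤ |C| * Real.exp (-b * x ^ 2) + |C'| * Real.exp (-b' * x ^ 2) := by
        gcongr
        · exact (h x).trans (by gcongr; exact le_abs_self _)
        · exact (h' x).trans (by gcongr; exact le_abs_self _)
    _ ≤ (|C| + |C'|) * Real.exp (-(min b b') * x ^ 2) := by
        rw [add_mul]
        gcongr

lemma sub (hu : GaussianDecay u) (hv : GaussianDecay v) : GaussianDecay (fun x => u x - v x) := by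
  simpa [sub_eq_add_neg] using hu.add (hv.const_mul (-1))

lemma mul (hu : GaussianDecay u) (hv : GaussianDecay v) : GaussianDecay (fun x => u x * v x) := by
  obtain ⟨hc, b, hb, C, h⟩ := hu
  obtain ⟨hc', b', hb', C', h'⟩ := hv
  refine ⟨hc.mul hc', b + b', add_pos hb hb', C * C', fun x => ?_⟩
  calc |u x * v x| = |u x| * |v x| := abs_mul _ _
    _ ≤ (C * Real.exp (-b * x ^ 2)) * (C' * Real.exp (-b' * x ^ 2)) :=
        mul_le_mul (h x) (h' x) (abs_nonneg _) ((abs_nonneg _).trans (h x))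
    _ = _ := by
        rw [show -(b + b') * x ^ 2 = -b * x ^ 2 + -b' * x ^ 2 by ring, Real.exp_add]
        ring

lemma sq (hu : GaussianDecay u) : GaussianDecay (fun x => u x ^ 2) := by
  simpa only [pow_two] using hu.mul hu

lemma id_mul (hu : GaussianDecay u) : GaussianDecay (fun x => x * u x) := by
  obtain ⟨hc, b, hb, C, h⟩ := hu
  refine ⟨continuous_id.mul hc, b / 2, by positivity, (1 + 2 / b) * |C|, fun x => ?_⟩
  have h1 : |x| ≤ (1 + 2 / b) * Real.exp (b / 2 * x ^ 2) := by
    have e := Real.add_one_le_exp (b / 2 * x ^ 2)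
    have e1 : 1 ≤ Real.exp (b / 2 * x ^ 2) := Real.one_le_exp (by positivity)
    have h2 : |x| ≤ 1 + x ^ 2 := by nlinarith [sq_abs x, sq_nonneg (|x| - 1), abs_nonneg x]
    have h3 : x ^ 2 ≤ 2 / b * Real.exp (b / 2 * x ^ 2) := by
      calc x ^ 2 = 2 / b * (b / 2 * x ^ 2) := by field_simp
        _ ≤ _ := by
          gcongr
          linarith
    linarith
  calc |x * u x| = |x| * |u x| := abs_mul _ _
    _ ≤ ((1 + 2 / b) * Real.exp (b / 2 * x ^ 2)) * (|C| * Real.exp (-b * x ^ 2)) := by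
        gcongr
        exact (h x).trans (by gcongr; exact le_abs_self _)
    _ = (1 + 2 / b) * |C| * (Real.exp (b / 2 * x ^ 2) * Real.exp (-b * x ^ 2)) := by ring
    _ = _ := by
        rw [← Real.exp_add]
        ring_nf

lemma sum {ι : Type*} (s : Finset ι) {f : ι → ℝ → ℝ} (hf : ∀ i ∈ s, GaussianDecay (f i)) :
    GaussianDecay (fun x => ∑ i ∈ s, f i x) := by
  classical
  induction s using Finset.induction_on with
  | empty => exact ⟨by simpa using continuous_const, 1, one_pos, 0, by simp⟩
  | insert i s hi ih =>
    simp only [Finset.sum_insert hi]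
    exact (hf i (by simp)).add (ih fun j hj => hf j (by simp [hj]))

lemma integral_deriv_eq_zero (hu : GaussianDecay u) (hv : GaussianDecay v)
    (h : ∀ x, HasDerivAt u (v x) x) : ∫ x, v x = 0 :=
  integral_eq_zero_of_hasDerivAt_of_integrable h hv.integrable hu.integrable

end GaussianDecay

lemma gaussianDecay_hermiteFun (k : ℕ) : GaussianDecay (hermiteFun k) := by
  induction k using Nat.strong_induction_on with
  | _ k ih =>
    rcases k with _ | k
    · have e : hermiteFun 0 = fun x => Real.pi ^ (-(1/4 : ℝ)) * Real.exp (-(x ^ 2) / 2) :=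
        funext hermiteFun_zero
      rw [e]
      refine GaussianDecay.const_mul ⟨by fun_prop, 1 / 2, by norm_num, 1, fun x => ?_⟩ _
      rw [abs_of_pos (Real.exp_pos _), one_mul]
      apply le_of_eq
      ring_nf
    · have hs : Real.sqrt (2 * ((k : ℝ) + 1)) ≠ 0 := by positivity
      have e : hermiteFun (k + 1) = fun x => (Real.sqrt (2 * ((k : ℝ) + 1)))⁻¹ *
          (2 * (x * hermiteFun k x) - Real.sqrt (2 * k) * hermiteFun (k - 1) x) := by
        funext x
        rw [eq_inv_mul_iff_mul_eq₀ hs, hermiteFun_succ]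
        ring
      rw [e]
      exact (((ih k (by lia)).id_mul.const_mul 2).sub
        ((ih (k - 1) (by lia)).const_mul _)).const_mul _

lemma gaussianDecay_hermiteFunDeriv (k : ℕ) : GaussianDecay (hermiteFunDeriv k) :=
  ((gaussianDecay_hermiteFun _).const_mul _).sub ((gaussianDecay_hermiteFun _).const_mul _)

/-! ### Orthonormality and Bessel inequalities -/

/-- Adjointness of the creation and annihilation operators. -/
lemma integral_hermiteFun_succ_mul (k : ℕ) {u v : ℝ → ℝ} (hu : GaussianDecay u)
    (hv : GaussianDecay v) (h : ∀ x, HasDerivAt u (v x) x) :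
    Real.sqrt (2 * (k + 1)) * ∫ x, hermiteFun (k + 1) x * u x =
      ∫ x, hermiteFun k x * (v x + x * u x) := by
  have hk := gaussianDecay_hermiteFun k
  have hk' := gaussianDecay_hermiteFun (k + 1)
  have hI := (hk.mul (hv.add hu.id_mul)).integrable
  have hJ := ((hk'.mul hu).const_mul (Real.sqrt (2 * (k + 1)))).integrable
  have h0 := GaussianDecay.integral_deriv_eq_zero (hk.mul hu)
    ((hk.mul (hv.add hu.id_mul)).sub ((hk'.mul hu).const_mul (Real.sqrt (2 * (k + 1)))))
    (fun x => ((hasDerivAt_hermiteFun k x).mul (h x)).congr_deriv (by ring))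
  rw [integral_sub hI hJ, integral_const_mul] at h0
  linarith

lemma integral_hermiteFun_succ_mul_hermiteFun (n m : ℕ) :
    Real.sqrt (2 * (n + 1)) * ∫ x, hermiteFun (n + 1) x * hermiteFun m x =
      Real.sqrt (2 * m) * ∫ x, hermiteFun n x * hermiteFun (m - 1) x := by
  rw [integral_hermiteFun_succ_mul n (gaussianDecay_hermiteFun m) (gaussianDecay_hermiteFunDeriv m)
    (hasDerivAt_hermiteFunDeriv m), ← integral_const_mul]
  congr 1 with x
  rw [hermiteFunDeriv_eq]
  ring

lemma integral_hermiteFun_zero : ∫ x, hermiteFun 0 x * hermiteFun 0 x = 1 := by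
  have e : ∀ x, hermiteFun 0 x * hermiteFun 0 x =
      Real.pi ^ (-(1/2 : ℝ)) * Real.exp (-1 * x ^ 2) := by
    intro x
    rw [hermiteFun_zero, mul_mul_mul_comm, ← Real.exp_add, ← Real.rpow_add Real.pi_pos]
    ring_nf
  simp_rw [e]
  rw [integral_const_mul, integral_gaussian, div_one, Real.sqrt_eq_rpow,
    ← Real.rpow_add Real.pi_pos]
  norm_num

lemma integral_hermiteFun_mul (n m : ℕ) :
    ∫ x, hermiteFun n x * hermiteFun m x = if n = m then 1 else 0 := by
  have h0 : ∀ n, ∫ x, hermiteFun (n + 1) x * hermiteFun 0 x = 0 := by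
    intro n
    have h := integral_hermiteFun_succ_mul_hermiteFun n 0
    simp only [Nat.cast_zero, mul_zero, Real.sqrt_zero, zero_mul] at h
    exact (mul_eq_zero.mp h).resolve_left (by positivity)
  induction n generalizing m with
  | zero =>
    rcases m with _ | m
    · simpa using integral_hermiteFun_zero
    · simp_rw [mul_comm (hermiteFun 0 _)]
      simpa using h0 m
  | succ n ih =>
    rcases m with _ | m
    · simpa using h0 n
    · have h := integral_hermiteFun_succ_mul_hermiteFun n (m + 1)
      rw [Nat.add_sub_cancel, ih] at h
      have hs : Real.sqrt (2 * ((n : ℝ) + 1)) ≠ 0 := by positivity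
      by_cases hnm : n = m
      · subst hnm
        push_cast at h
        rw [if_pos rfl] at h
        rw [if_pos rfl]
        exact mul_left_cancel₀ hs h
      · rw [if_neg hnm, mul_zero] at h
        rw [if_neg (by lia)]
        exact (mul_eq_zero.mp h).resolve_left hs

/-- The one-dimensional Hermite coefficient. -/
def hermiteCoef (u : ℝ → ℝ) (k : ℕ) : ℝ := ∫ x, hermiteFun k x * u x

lemma sum_hermiteCoef_sq_le {u : ℝ → ℝ} (hu : GaussianDecay u) (K : ℕ) :
    ∑ k ∈ Finset.range K, hermiteCoef u k ^ 2 ≤ ∫ x, u x ^ 2 := by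
  set c := hermiteCoef u with hc
  have he := gaussianDecay_hermiteFun
  have h0 : 0 ≤ ∫ x, (u x - ∑ k ∈ Finset.range K, c k * hermiteFun k x) ^ 2 :=
    integral_nonneg fun x => sq_nonneg _
  have e : ∀ x, (u x - ∑ k ∈ Finset.range K, c k * hermiteFun k x) ^ 2 =
      (u x ^ 2 - ∑ k ∈ Finset.range K, 2 * c k * (hermiteFun k x * u x)) +
      ∑ k ∈ Finset.range K, ∑ l ∈ Finset.range K,
        c k * c l * (hermiteFun k x * hermiteFun l x) := by
    intro x
    have h1 : (∑ k ∈ Finset.range K, c k * hermiteFun k x) ^ 2 =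
        ∑ k ∈ Finset.range K, ∑ l ∈ Finset.range K,
          c k * c l * (hermiteFun k x * hermiteFun l x) := by
      rw [pow_two, Finset.sum_mul_sum]
      refine Finset.sum_congr rfl fun k _ => Finset.sum_congr rfl fun l _ => by ring
    have h2 : ∑ k ∈ Finset.range K, 2 * c k * (hermiteFun k x * u x) =
        2 * u x * ∑ k ∈ Finset.range K, c k * hermiteFun k x := by
      rw [Finset.mul_sum]
      exact Finset.sum_congr rfl fun k _ => by ring
    rw [← h1, h2]
    ring
  have d1 : ∀ k, GaussianDecay fun x => 2 * c k * (hermiteFun k x * u x) :=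
    fun k => ((he k).mul hu).const_mul _
  have d2 : ∀ k l, GaussianDecay fun x => c k * c l * (hermiteFun k x * hermiteFun l x) :=
    fun k l => ((he k).mul (he l)).const_mul _
  have d3 : ∀ k, GaussianDecay fun x => ∑ l ∈ Finset.range K,
      c k * c l * (hermiteFun k x * hermiteFun l x) := fun k => .sum _ fun l _ => d2 k l
  simp_rw [e] at h0
  rw [integral_add (hu.sq.sub (.sum _ fun k _ => d1 k)).integrable
      (GaussianDecay.sum _ fun k _ => d3 k).integrable,
    integral_sub hu.sq.integrable (GaussianDecay.sum _ fun k _ => d1 k).integrable,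
    integral_finsetSum _ fun k _ => (d1 k).integrable,
    integral_finsetSum _ fun k _ => (d3 k).integrable] at h0
  simp_rw [integral_finsetSum _ fun l _ => (d2 _ l).integrable, integral_const_mul,
    integral_hermiteFun_mul] at h0
  have h3 : ∀ k, ∫ x, hermiteFun k x * u x = c k := fun k => rfl
  have h4 : ∑ k ∈ Finset.range K, ∑ l ∈ Finset.range K, c k * c l * (if k = l then 1 else 0) =
      ∑ k ∈ Finset.range K, c k ^ 2 := by
    refine Finset.sum_congr rfl fun k hk => ?_
    rw [Finset.sum_eq_single_of_mem k hk (fun l _ hl => by simp [hl.symm])]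
    simp [pow_two]
  have h5 : ∑ k ∈ Finset.range K, 2 * c k * ∫ x, hermiteFun k x * u x =
      2 * ∑ k ∈ Finset.range K, c k ^ 2 := by
    rw [Finset.mul_sum]
    exact Finset.sum_congr rfl fun k _ => by rw [h3]; ring
  rw [h4, h5] at h0
  linarith

lemma sum_mul_hermiteCoef_sq_le {u v : ℝ → ℝ} (hu : GaussianDecay u)
    (hv : GaussianDecay v) (h : ∀ x, HasDerivAt u (v x) x) (K : ℕ) :
    ∑ k ∈ Finset.range K, (2 * k + 1) * hermiteCoef u k ^ 2 ≤
      (∫ x, u x ^ 2) + ∫ x, (v x + x * u x) ^ 2 := by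
  have hA : ∑ k ∈ Finset.range K, 2 * k * hermiteCoef u k ^ 2 ≤ ∫ x, (v x + x * u x) ^ 2 := by
    rcases K with _ | K
    · simpa using integral_nonneg fun x => sq_nonneg (v x + x * u x)
    · refine le_trans (le_of_eq ?_) (sum_hermiteCoef_sq_le (hv.add hu.id_mul) K)
      rw [Finset.sum_range_succ']
      simp only [Nat.cast_zero, mul_zero, zero_mul, add_zero]
      refine Finset.sum_congr rfl fun k _ => ?_
      rw [hermiteCoef, hermiteCoef, ← integral_hermiteFun_succ_mul k hu hv h, mul_pow,
        Real.sq_sqrt (by positivity)]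
      push_cast
      ring
  have hB := sum_hermiteCoef_sq_le hu K
  simp_rw [add_mul, Finset.sum_add_distrib, one_mul]
  linarith

/-! ### Expansion of the square of a Hermite function -/

/-- The Taylor coefficients of `(1 - r) ^ (-1/2)`. -/
def invSqrtCoeff : ℕ → ℝ
  | 0 => 1
  | i + 1 => (2 * i + 1) / (2 * i + 2) * invSqrtCoeff i

lemma invSqrtCoeff_pos (i : ℕ) : 0 < invSqrtCoeff i := by
  induction i with
  | zero => exact one_pos
  | succ i ih =>
    rw [invSqrtCoeff]
    positivity

lemma invSqrtCoeff_sq_le (i : ℕ) : invSqrtCoeff i ^ 2 ≤ 1 / (i + 1) := by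
  induction i with
  | zero => norm_num [invSqrtCoeff]
  | succ i ih =>
    rw [invSqrtCoeff, mul_pow]
    calc ((2 * i + 1 : ℝ) / (2 * i + 2)) ^ 2 * invSqrtCoeff i ^ 2
        ≤ ((2 * i + 1 : ℝ) / (2 * i + 2)) ^ 2 * (1 / ((i : ℝ) + 1)) := by gcongr
      _ ≤ 1 / (((i + 1 : ℕ) : ℝ) + 1) := by
        push_cast
        rw [div_pow, div_mul_div_comm, div_le_div_iff₀ (by positivity) (by positivity)]
        have : (0 : ℝ) ≤ i := by positivity
        nlinarith

/-- A formal linear first-order differential equation determines its solution. -/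
lemma powerSeries_eq_zero_of_mul_derivative_eq {u v F : PowerSeries ℝ}
    (hu : PowerSeries.constantCoeff u ≠ 0)
    (h : u * PowerSeries.derivative ℝ F = v * F) (h0 : PowerSeries.coeff 0 F = 0) : F = 0 := by
  have hd : PowerSeries.derivative ℝ F = u⁻¹ * v * F := by
    rw [mul_assoc, ← h, ← mul_assoc, PowerSeries.inv_mul_cancel _ hu, one_mul]
  ext n
  rw [map_zero]
  induction n using Nat.strong_induction_on with
  | _ n ih =>
    rcases n with _ | n
    · exact h0
    · have hn := congrArg (PowerSeries.coeff n) hd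
      rw [PowerSeries.coeff_derivative, PowerSeries.coeff_mul,
        Finset.sum_eq_zero fun p hp => ?_] at hn
      · exact (mul_eq_zero.mp hn).resolve_right (by positivity)
      · have := Finset.HasAntidiagonal.mem_antidiagonal.mp hp
        rw [ih p.2 (by lia), mul_zero]

lemma mk_invSqrtCoeff_derivative :
    (1 - PowerSeries.X) * PowerSeries.derivative ℝ (PowerSeries.mk invSqrtCoeff) =
      PowerSeries.C (1 / 2 : ℝ) * PowerSeries.mk invSqrtCoeff := by
  ext n
  rw [sub_mul, one_mul, map_sub, PowerSeries.coeff_C_mul]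
  rcases n with _ | n
  · simp [PowerSeries.coeff_derivative, invSqrtCoeff]
  · rw [PowerSeries.coeff_succ_X_mul]
    simp only [PowerSeries.coeff_derivative, PowerSeries.coeff_mk]
    rw [invSqrtCoeff.eq_2 (n + 1)]
    push_cast
    field_simp
    ring

/-- The even Hermite functions, weighted. -/
def evenHermite (y : ℝ) (j : ℕ) : ℝ := Real.sqrt (invSqrtCoeff j) * hermiteFun (2 * j) y

lemma sqrt_invSqrtCoeff_succ (j : ℕ) :
    Real.sqrt (invSqrtCoeff j) * Real.sqrt (2 * (2 * j + 1)) * Real.sqrt (2 * (2 * j + 2)) =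
      2 * (2 * j + 2) * Real.sqrt (invSqrtCoeff (j + 1)) := by
  have := (invSqrtCoeff_pos j).le
  rw [← Real.sqrt_mul this, ← Real.sqrt_mul (by positivity), invSqrtCoeff,
    ← Real.sqrt_sq (show (0 : ℝ) ≤ 2 * (2 * j + 2) by positivity), ← Real.sqrt_mul (by positivity)]
  congr 1
  rw [Real.sqrt_sq (by positivity)]
  field_simp

lemma sqrt_invSqrtCoeff_succ' (j : ℕ) :
    Real.sqrt (invSqrtCoeff (j + 1)) * Real.sqrt (2 * (2 * j + 1)) * Real.sqrt (2 * (2 * j + 2)) =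
      2 * (2 * j + 1) * Real.sqrt (invSqrtCoeff j) := by
  have h1 := (invSqrtCoeff_pos j).le
  have h2 := (invSqrtCoeff_pos (j + 1)).le
  rw [← Real.sqrt_mul h2, ← Real.sqrt_mul (by positivity), invSqrtCoeff,
    ← Real.sqrt_sq (show (0 : ℝ) ≤ 2 * (2 * j + 1) by positivity), ← Real.sqrt_mul (by positivity)]
  congr 1
  rw [Real.sqrt_sq (by positivity)]
  field_simp

lemma evenHermite_one (y : ℝ) : evenHermite y 1 = (y ^ 2 - 1 / 2) * evenHermite y 0 := by
  have h1 := hermiteFun_succ 0 y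
  have h2 := hermiteFun_succ 1 y
  have hs := sqrt_invSqrtCoeff_succ 0
  simp only [evenHermite, mul_zero, mul_one] at *
  norm_num at *
  have h2' : Real.sqrt 2 ^ 2 = 2 := Real.sq_sqrt (by norm_num)
  generalize Real.sqrt (invSqrtCoeff 1) = a at *
  generalize Real.sqrt (invSqrtCoeff 0) = b at *
  generalize hermiteFun 2 y = e2 at *
  generalize hermiteFun 1 y = e1 at *
  generalize hermiteFun 0 y = e0 at *
  generalize Real.sqrt 2 = r at *
  linear_combination (-e2 / 4) * hs + b * r / 4 * h2 + b * y / 2 * h1 - b / 4 * e0 * h2'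

lemma evenHermite_add_two (y : ℝ) (j : ℕ) :
    (j + 2) * evenHermite y (j + 2) =
      (y ^ 2 - 1 / 2 - 2 * (j + 1)) * evenHermite y (j + 1) - (j + 1 / 2) * evenHermite y j := by
  have h1 := hermiteFun_succ (2 * j + 1) y
  have h2 := hermiteFun_succ (2 * j + 2) y
  have h3 := hermiteFun_succ (2 * j + 3) y
  have hs := sqrt_invSqrtCoeff_succ (j + 1)
  have hs' := sqrt_invSqrtCoeff_succ' j
  simp only [evenHermite, show 2 * (j + 2) = 2 * j + 3 + 1 by ring,
    show 2 * (j + 1) = 2 * j + 1 + 1 by ring] at *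
  simp only [Nat.add_sub_cancel, show 2 * j + 2 - 1 = 2 * j + 1 by lia,
    show 2 * j + 3 - 1 = 2 * j + 2 by lia, show 2 * j + 2 + 1 = 2 * j + 3 by lia,
    show 2 * j + 1 + 1 = 2 * j + 2 by lia, show j + 1 + 1 = j + 2 by lia] at *
  push_cast at *
  rw [show (2 * ((2 : ℝ) * j + 1 + 1)) = 2 * (2 * j + 2) by ring] at *
  rw [show (2 * ((2 : ℝ) * j + 2 + 1)) = 2 * (2 * j + 3) by ring] at *
  rw [show (2 * ((2 : ℝ) * j + 3 + 1)) = 2 * (2 * j + 4) by ring] at *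
  rw [show (2 * ((2 : ℝ) * (j + 1) + 1)) = 2 * (2 * j + 3) by ring,
    show (2 * ((2 : ℝ) * (j + 1) + 2)) = 2 * (2 * j + 4) by ring] at hs
  have q2 : Real.sqrt (2 * (2 * (j : ℝ) + 2)) ^ 2 = 2 * (2 * j + 2) :=
    Real.sq_sqrt (by positivity)
  have q3 : Real.sqrt (2 * (2 * (j : ℝ) + 3)) ^ 2 = 2 * (2 * j + 3) :=
    Real.sq_sqrt (by positivity)
  generalize Real.sqrt (invSqrtCoeff (j + 2)) = a2 at *
  generalize Real.sqrt (invSqrtCoeff (j + 1)) = a1 at *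
  generalize Real.sqrt (invSqrtCoeff j) = a0 at *
  generalize hermiteFun (2 * j + 3 + 1) y = e4 at *
  generalize hermiteFun (2 * j + 3) y = e3 at *
  generalize hermiteFun (2 * j + 2) y = e2 at *
  generalize hermiteFun (2 * j + 1) y = e1 at *
  generalize hermiteFun (2 * j) y = e0 at *
  generalize Real.sqrt (2 * (2 * (j : ℝ) + 1)) = r1 at *
  generalize Real.sqrt (2 * (2 * (j : ℝ) + 2)) = r2 at *
  generalize Real.sqrt (2 * (2 * (j : ℝ) + 3)) = r3 at *
  generalize Real.sqrt (2 * (2 * (j : ℝ) + 4)) = r4 at *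
  linear_combination (-e4 / 4) * hs - e0 / 4 * hs' + a1 * r3 / 4 * h3 + a1 * y / 2 * h2
    + a1 * r2 / 4 * h1 - a1 * e2 / 4 * q2 - a1 * e2 / 4 * q3

lemma mk_evenHermite_derivative (y : ℝ) :
    (1 + PowerSeries.X) ^ 2 * PowerSeries.derivative ℝ (PowerSeries.mk (evenHermite y)) =
      (PowerSeries.C (y ^ 2) - PowerSeries.C (1 / 2) * (1 + PowerSeries.X)) *
        PowerSeries.mk (evenHermite y) := by
  obtain ⟨c, hc⟩ : ∃ c, c = y ^ 2 - 1 / 2 := ⟨_, rfl⟩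
  have e : ∀ F G : PowerSeries ℝ, (1 + PowerSeries.X) ^ 2 * F -
      (PowerSeries.C (y ^ 2) - PowerSeries.C (1 / 2) * (1 + PowerSeries.X)) * G =
      F + PowerSeries.X * (PowerSeries.C 2 * F) + PowerSeries.X * (PowerSeries.X * F)
      - PowerSeries.C c * G
      + PowerSeries.X * (PowerSeries.C (1 / 2) * G) := by
    intro F G
    rw [hc, map_sub, show PowerSeries.C (2 : ℝ) = 2 from map_ofNat _ 2]
    ring
  rw [← sub_eq_zero, e]
  ext n
  simp only [map_add, map_sub, map_zero]
  rcases n with _ | _ | n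
  · simp [PowerSeries.coeff_derivative, evenHermite_one, hc]
  · simp only [PowerSeries.coeff_succ_X_mul, PowerSeries.coeff_derivative, PowerSeries.coeff_C_mul,
      PowerSeries.coeff_mk, zero_add, PowerSeries.coeff_zero_X_mul]
    have := evenHermite_add_two y 0
    push_cast at *
    simp only [zero_add] at *
    rw [hc]
    linarith
  · simp only [PowerSeries.coeff_succ_X_mul, PowerSeries.coeff_derivative, PowerSeries.coeff_C_mul,
      PowerSeries.coeff_mk]
    have := evenHermite_add_two y (n + 1)
    push_cast at *
    rw [hc]
    linarith

lemma hermiteFun_sq_recurrence (x : ℝ) (k : ℕ) :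
    (k + 1) * hermiteFun (k + 1) x ^ 2 + k * hermiteFun k x ^ 2 -
      k * hermiteFun (k - 1) x ^ 2 - (k - 1 : ℕ) * hermiteFun (k - 2) x ^ 2 =
      2 * x ^ 2 * (hermiteFun k x ^ 2 - if k = 0 then 0 else hermiteFun (k - 1) x ^ 2) := by
  have h1 := hermiteFun_succ k x
  have q1 : Real.sqrt (2 * ((k : ℝ) + 1)) ^ 2 = 2 * (k + 1) := Real.sq_sqrt (by positivity)
  have q0 : Real.sqrt (2 * (k : ℝ)) ^ 2 = 2 * k := Real.sq_sqrt (by positivity)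
  rcases k with _ | k
  · simp only [Nat.cast_zero, mul_zero, Real.sqrt_zero, zero_mul, sub_zero, zero_add] at *
    simp only [if_pos, Nat.zero_sub, Nat.cast_zero, zero_mul, sub_zero] at *
    generalize hermiteFun 0 x = e0 at *
    generalize hermiteFun 1 x = e1 at *
    generalize Real.sqrt (2 * 1) = r at *
    linear_combination (r * e1 + 2 * x * e0) / 2 * h1 - e1 ^ 2 / 2 * q1
  · have h2 := hermiteFun_succ k x
    have q2 : Real.sqrt (2 * (k : ℝ)) ^ 2 = 2 * k := Real.sq_sqrt (by positivity)
    simp only [Nat.add_sub_cancel, show k + 1 - 2 = k - 1 by lia, Nat.succ_ne_zero, if_false] at *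
    push_cast at *
    generalize hermiteFun (k + 1 + 1) x = e3 at *
    generalize hermiteFun (k + 1) x = e2 at *
    generalize hermiteFun k x = e1 at *
    generalize hermiteFun (k - 1) x = e0 at *
    generalize Real.sqrt (2 * ((k : ℝ) + 1 + 1)) = r3 at *
    generalize Real.sqrt (2 * ((k : ℝ) + 1)) = r2 at *
    generalize Real.sqrt (2 * (k : ℝ)) = r1 at *
    linear_combination (r3 * e3 + 2 * x * e2 - r2 * e1) / 2 * h1 - e3 ^ 2 / 2 * q1
      + e1 ^ 2 / 2 * q0 - (r1 * e0 + 2 * x * e1 - r2 * e2) / 2 * h2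
      + e0 ^ 2 / 2 * q2 - e2 ^ 2 / 2 * q0

lemma mk_hermiteFun_sq_derivative (x : ℝ) :
    ((1 - PowerSeries.X) * (1 + PowerSeries.X) ^ 2) *
        PowerSeries.derivative ℝ (PowerSeries.mk fun k => hermiteFun k x ^ 2) =
      (PowerSeries.X * (1 + PowerSeries.X) + PowerSeries.C (2 * x ^ 2) * (1 - PowerSeries.X)) *
        PowerSeries.mk fun k => hermiteFun k x ^ 2 := by
  have e : ∀ F G : PowerSeries ℝ, ((1 - PowerSeries.X) * (1 + PowerSeries.X) ^ 2) * F -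
      (PowerSeries.X * (1 + PowerSeries.X) + PowerSeries.C (2 * x ^ 2) * (1 - PowerSeries.X)) * G =
      F + PowerSeries.X * F - PowerSeries.X * (PowerSeries.X * F)
      - PowerSeries.X * (PowerSeries.X * (PowerSeries.X * F))
      - PowerSeries.X * G - PowerSeries.X * (PowerSeries.X * G)
      - PowerSeries.C (2 * x ^ 2) * G
      + PowerSeries.X * (PowerSeries.C (2 * x ^ 2) * G) := by
    intro F G
    ring
  rw [← sub_eq_zero, e]
  ext n
  simp only [map_add, map_sub, map_zero]
  have h := hermiteFun_sq_recurrence x n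
  rcases n with _ | _ | _ | n
  all_goals simp only [PowerSeries.coeff_succ_X_mul, PowerSeries.coeff_derivative, PowerSeries.coeff_C_mul,
      PowerSeries.coeff_mk, zero_add, PowerSeries.coeff_zero_X_mul] at *
  case succ.succ.succ =>
    simp only [show n + 1 + 1 + 1 - 2 = n + 1 by lia, Nat.add_sub_cancel, Nat.succ_ne_zero,
      if_false] at h
    push_cast at h ⊢
    linarith
  all_goals
    norm_num at h ⊢
    linarith

/-- The square of a Hermite function in terms of dilated Hermite functions. -/
lemma hermiteFun_sq_eq (N : ℕ) (x : ℝ) :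
    hermiteFun N x ^ 2 = Real.pi ^ (-(1/4 : ℝ)) *
      ∑ j ∈ Finset.range (N + 1), invSqrtCoeff (N - j) * evenHermite (Real.sqrt 2 * x) j := by
  set κ := Real.pi ^ (-(1/4 : ℝ)) with hκ
  set P : PowerSeries ℝ := PowerSeries.mk fun k => hermiteFun k x ^ 2 with hP
  set A : PowerSeries ℝ := PowerSeries.mk invSqrtCoeff with hA
  set Q : PowerSeries ℝ := PowerSeries.mk (evenHermite (Real.sqrt 2 * x)) with hQ
  have dP := mk_hermiteFun_sq_derivative x
  have dA := mk_invSqrtCoeff_derivative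
  have dQ := mk_evenHermite_derivative (Real.sqrt 2 * x)
  rw [mul_pow, Real.sq_sqrt (by norm_num)] at dQ
  rw [← hP] at dP
  rw [← hA] at dA
  rw [← hQ] at dQ
  have key : P - PowerSeries.C κ * (Q * A) = 0 := by
    refine powerSeries_eq_zero_of_mul_derivative_eq
      (u := (1 - PowerSeries.X) * (1 + PowerSeries.X) ^ 2)
      (v := PowerSeries.X * (1 + PowerSeries.X) + PowerSeries.C (2 * x ^ 2) * (1 - PowerSeries.X))
      (by simp) ?_ ?_
    · have hd : PowerSeries.derivative ℝ (P - PowerSeries.C κ * (Q * A)) =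
          PowerSeries.derivative ℝ P - PowerSeries.C κ *
            (Q * PowerSeries.derivative ℝ A + A * PowerSeries.derivative ℝ Q) := by
        rw [map_sub, ← PowerSeries.smul_eq_C_mul, ← PowerSeries.smul_eq_C_mul,
          (PowerSeries.derivative ℝ).map_smul,
          Derivation.leibniz]
        simp
      have h2 : PowerSeries.C (1 / 2 : ℝ) * 2 = 1 := by
        rw [← map_ofNat (PowerSeries.C (R := ℝ)) 2, ← map_mul]
        norm_num
      rw [hd]
      linear_combination dP - PowerSeries.C κ * (1 + PowerSeries.X) ^ 2 * Q * dA
        - PowerSeries.C κ * (1 - PowerSeries.X) * A * dQ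
        - PowerSeries.C κ * PowerSeries.X * (1 + PowerSeries.X) * Q * A * h2
    · rw [map_sub, PowerSeries.coeff_C_mul, PowerSeries.coeff_zero_eq_constantCoeff_apply,
        PowerSeries.coeff_zero_eq_constantCoeff_apply, map_mul]
      simp only [hP, hA, hQ, PowerSeries.constantCoeff_mk, evenHermite, invSqrtCoeff, hermiteFun_zero,
        mul_pow, Real.sqrt_one, mul_zero, ← hκ, Real.sq_sqrt (show (0 : ℝ) ≤ 2 by norm_num)]
      rw [← Real.exp_nat_mul]
      ring_nf
  have hN := congrArg (PowerSeries.coeff N) key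
  rw [map_sub, PowerSeries.coeff_C_mul, PowerSeries.coeff_mul, map_zero] at hN
  simp only [hP, hA, hQ, PowerSeries.coeff_mk] at hN
  rw [Finset.Nat.sum_antidiagonal_eq_sum_range_succ_mk] at hN
  simp only at hN
  rw [sub_eq_zero.mp hN]
  congr 1
  exact Finset.sum_congr rfl fun j _ => mul_comm _ _

/-! ### The `L²` norm of a product of Hermite functions -/

lemma integral_evenHermite_mul (j l : ℕ) :
    ∫ x, evenHermite (Real.sqrt 2 * x) j * evenHermite (Real.sqrt 2 * x) l =
      if j = l then (Real.sqrt 2)⁻¹ * invSqrtCoeff l else 0 := by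
  rw [Measure.integral_comp_mul_left (fun y => evenHermite y j * evenHermite y l)]
  have e : ∀ y, evenHermite y j * evenHermite y l = Real.sqrt (invSqrtCoeff j) *
      Real.sqrt (invSqrtCoeff l) * (hermiteFun (2 * j) y * hermiteFun (2 * l) y) := by
    intro y
    simp only [evenHermite]
    ring
  simp_rw [e]
  rw [integral_const_mul, integral_hermiteFun_mul, abs_of_nonneg (by positivity), smul_eq_mul]
  by_cases h : j = l
  · subst h
    simp [Real.mul_self_sqrt (invSqrtCoeff_pos j).le]
  · simp [h]

lemma gaussianDecay_evenHermite (j : ℕ) :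
    GaussianDecay fun x => evenHermite (Real.sqrt 2 * x) j := by
  obtain ⟨hc, b, hb, C, h⟩ := (gaussianDecay_hermiteFun (2 * j)).const_mul
    (Real.sqrt (invSqrtCoeff j))
  refine ⟨hc.comp (continuous_const_mul _), 2 * b, by positivity, C, fun x => (h _).trans_eq ?_⟩
  rw [mul_pow, Real.sq_sqrt (by norm_num)]
  ring_nf

lemma integral_hermiteFun_mul_sq {N M : ℕ} (h : M ≤ N) :
    ∫ x, (hermiteFun N x * hermiteFun M x) ^ 2 = (Real.pi ^ (-(1/4 : ℝ))) ^ 2 * (Real.sqrt 2)⁻¹ *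
      ∑ l ∈ Finset.range (M + 1), invSqrtCoeff l * invSqrtCoeff (N - l) * invSqrtCoeff (M - l) := by
  have e : ∀ x, (hermiteFun N x * hermiteFun M x) ^ 2 = (Real.pi ^ (-(1/4 : ℝ))) ^ 2 *
      ∑ l ∈ Finset.range (M + 1), ∑ j ∈ Finset.range (N + 1),
        invSqrtCoeff (M - l) * invSqrtCoeff (N - j) *
          (evenHermite (Real.sqrt 2 * x) j * evenHermite (Real.sqrt 2 * x) l) := by
    intro x
    rw [mul_pow, hermiteFun_sq_eq, hermiteFun_sq_eq M, mul_mul_mul_comm, Finset.sum_mul_sum,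
      ← pow_two, Finset.sum_comm]
    congr 1
    exact Finset.sum_congr rfl fun l _ => Finset.sum_congr rfl fun j _ => by ring
  have d : ∀ l j, GaussianDecay fun x => invSqrtCoeff (M - l) * invSqrtCoeff (N - j) *
      (evenHermite (Real.sqrt 2 * x) j * evenHermite (Real.sqrt 2 * x) l) := fun l j =>
    ((gaussianDecay_evenHermite j).mul (gaussianDecay_evenHermite l)).const_mul _
  simp_rw [e]
  rw [integral_const_mul, mul_assoc,
    integral_finsetSum _ fun l _ => (GaussianDecay.sum _ fun j _ => d l j).integrable,
    Finset.mul_sum (s := Finset.range (M + 1)) (a := (Real.sqrt 2)⁻¹)]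
  congr 1
  refine Finset.sum_congr rfl fun l hl => ?_
  rw [integral_finsetSum _ fun j _ => (d l j).integrable]
  simp_rw [integral_const_mul, integral_evenHermite_mul]
  have hl' := Finset.mem_range.mp hl
  rw [Finset.sum_eq_single_of_mem l (Finset.mem_range.mpr (by lia)) fun j _ hj => by simp [hj]]
  simp only [if_true]
  ring

lemma invSqrtCoeff_le_sqrt {i N : ℕ} (h : N ≤ 2 * i) :
    invSqrtCoeff i ≤ Real.sqrt (2 / (N + 1)) := by
  apply Real.le_sqrt_of_sq_le
  refine (invSqrtCoeff_sq_le i).trans ?_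
  rw [div_le_div_iff₀ (by positivity) (by positivity)]
  have : (N : ℝ) ≤ 2 * i := by exact_mod_cast h
  linarith

lemma invSqrtCoeff_mul_le (i j : ℕ) :
    invSqrtCoeff i * invSqrtCoeff j ≤ (1 / ((i : ℝ) + 1) + 1 / ((j : ℝ) + 1)) / 2 := by
  nlinarith [invSqrtCoeff_sq_le i, invSqrtCoeff_sq_le j,
    sq_nonneg (invSqrtCoeff i - invSqrtCoeff j)]

lemma sum_invSqrtCoeff_le {N M : ℕ} (h : M ≤ N) :
    ∑ l ∈ Finset.range (M + 1), invSqrtCoeff l * invSqrtCoeff (N - l) * invSqrtCoeff (M - l) ≤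
      Real.sqrt (2 / (N + 1)) * (2 * (1 + Real.log (N + 1))) := by
  have hterm : ∀ l ∈ Finset.range (M + 1),
      invSqrtCoeff l * invSqrtCoeff (N - l) * invSqrtCoeff (M - l) ≤
        Real.sqrt (2 / (N + 1)) * (1 / ((l : ℝ) + 1) + 1 / (((M - l : ℕ) : ℝ) + 1)) := by
    intro l hl
    have hl' := Finset.mem_range.mp hl
    have p1 := invSqrtCoeff_pos l
    have p2 := invSqrtCoeff_pos (N - l)
    have p3 := invSqrtCoeff_pos (M - l)
    have q1 : 0 < 1 / ((l : ℝ) + 1) := by positivity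
    have q3 : 0 < 1 / (((M - l : ℕ) : ℝ) + 1) := by positivity
    rcases le_total N (2 * l) with hN | hN
    · have h1 := invSqrtCoeff_mul_le (N - l) (M - l)
      have h2 : 1 / (((N - l : ℕ) : ℝ) + 1) ≤ 1 / (((M - l : ℕ) : ℝ) + 1) := by
        gcongr
      rw [mul_assoc]
      exact mul_le_mul (invSqrtCoeff_le_sqrt hN) (by linarith) (by positivity) (by positivity)
    · have h1 := invSqrtCoeff_mul_le l (M - l)
      rw [mul_comm (invSqrtCoeff l), mul_assoc]
      exact mul_le_mul (invSqrtCoeff_le_sqrt (by lia)) (by linarith) (by positivity)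
        (by positivity)
  refine (Finset.sum_le_sum hterm).trans ?_
  rw [← Finset.mul_sum, Finset.sum_add_distrib]
  have hr : ∑ l ∈ Finset.range (M + 1), 1 / (((M - l : ℕ) : ℝ) + 1) =
      ∑ l ∈ Finset.range (M + 1), 1 / ((l : ℝ) + 1) := by
    rw [← Finset.sum_range_reflect]
    refine Finset.sum_congr rfl fun l hl => ?_
    have hl' := Finset.mem_range.mp hl
    rw [show M - (M + 1 - 1 - l) = l by lia]
  have hh : ∑ l ∈ Finset.range (M + 1), 1 / ((l : ℝ) + 1) ≤ 1 + Real.log (N + 1) := by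
    have h1 := harmonic_le_one_add_log (M + 1)
    have h2 : ((harmonic (M + 1) : ℚ) : ℝ) = ∑ l ∈ Finset.range (M + 1), 1 / ((l : ℝ) + 1) := by
      simp [harmonic]
    rw [← h2]
    refine h1.trans ?_
    push_cast
    gcongr
  rw [hr]
  gcongr
  linarith

lemma integral_hermiteFun_mul_sq_le {ε : ℝ} (hε : 0 < ε) {N M : ℕ} (h : M ≤ N) :
    ∫ x, (hermiteFun N x * hermiteFun M x) ^ 2 ≤
      2 * (1 + 1 / ε) * ((N : ℝ) + 1) ^ (ε - 1 / 2) := by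
  rw [integral_hermiteFun_mul_sq h]
  have hN : (0 : ℝ) < N + 1 := by positivity
  have hs := sum_invSqrtCoeff_le h
  have hκ : (Real.pi ^ (-(1/4 : ℝ))) ^ 2 ≤ 1 := by
    apply pow_le_one₀ (by positivity)
    exact Real.rpow_le_one_of_one_le_of_nonpos (by linarith [Real.pi_gt_three]) (by norm_num)
  have hlog : 1 + Real.log (N + 1) ≤ (1 + 1 / ε) * ((N : ℝ) + 1) ^ ε := by
    have h1 := Real.log_le_rpow_div hN.le hε
    have h2 : 1 ≤ ((N : ℝ) + 1) ^ ε := Real.one_le_rpow (by linarith) hε.le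
    have h3 : (1 + 1 / ε) * ((N : ℝ) + 1) ^ ε =
      ((N : ℝ) + 1) ^ ε + ((N : ℝ) + 1) ^ ε / ε := by ring
    rw [h3]
    linarith
  have hlog0 : 0 ≤ Real.log ((N : ℝ) + 1) := Real.log_nonneg (by linarith)
  have hsq : Real.sqrt (2 / ((N : ℝ) + 1)) = Real.sqrt 2 * ((N : ℝ) + 1) ^ (-(1 / 2) : ℝ) := by
    rw [Real.sqrt_div (by norm_num), Real.rpow_neg hN.le, ← Real.sqrt_eq_rpow, div_eq_mul_inv]
  have h2 : Real.sqrt 2 ≠ 0 := by positivity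
  calc (Real.pi ^ (-(1/4 : ℝ))) ^ 2 * (Real.sqrt 2)⁻¹ * ∑ l ∈ Finset.range (M + 1),
        invSqrtCoeff l * invSqrtCoeff (N - l) * invSqrtCoeff (M - l)
      ≤ 1 * (Real.sqrt 2)⁻¹ * (Real.sqrt (2 / (N + 1)) * (2 * (1 + Real.log (N + 1)))) := by
        gcongr
        exact Finset.sum_nonneg fun l _ => (mul_pos (mul_pos (invSqrtCoeff_pos _)
          (invSqrtCoeff_pos _)) (invSqrtCoeff_pos _)).le
    _ = 2 * (1 + Real.log (N + 1)) * ((N : ℝ) + 1) ^ (-(1 / 2) : ℝ) := by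
        rw [hsq]
        field_simp
    _ ≤ 2 * ((1 + 1 / ε) * ((N : ℝ) + 1) ^ ε) * ((N : ℝ) + 1) ^ (-(1 / 2) : ℝ) := by gcongr
    _ = _ := by
        rw [sub_eq_add_neg, Real.rpow_add hN]
        ring

lemma rpow_le_of_le_mul {X Y c θ : ℝ} (hX : 0 < X) (hY : 0 < Y) (hc : 1 ≤ c) (h : X ≤ c * Y)
    (hθ : θ ≤ 0) (hθ' : -1 ≤ θ) : Y ^ θ ≤ c * X ^ θ := by
  have hc0 : 0 < c := by linarith
  have h1 : (c * Y) ^ θ ≤ X ^ θ := Real.rpow_le_rpow_of_nonpos hX h hθ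
  rw [Real.mul_rpow hc0.le hY.le] at h1
  have h2 : 1 ≤ c * c ^ θ := by
    have h := Real.one_le_rpow hc (show 0 ≤ 1 + θ by linarith)
    rwa [Real.rpow_add hc0, Real.rpow_one] at h
  have h3 : 0 < Y ^ θ := by positivity
  calc Y ^ θ ≤ c * c ^ θ * Y ^ θ := le_mul_of_one_le_left h3.le h2
    _ = c * (c ^ θ * Y ^ θ) := by ring
    _ ≤ _ := by gcongr

/-- Bilinear `L²` bound. -/
lemma exists_integral_two_hermiteFun_le {ε : ℝ} (hε : 0 < ε) (hε' : ε ≤ 1 / 2) :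
    ∃ K : ℝ, 0 < K ∧ ∀ (a b : ℕ) (X : ℝ), 0 < X →
      (X ≤ 2 * ((a : ℝ) + 1) ∨ X ≤ 2 * ((b : ℝ) + 1)) →
      ∫ x, (hermiteFun a x * hermiteFun b x) ^ 2 ≤ K * X ^ (ε - 1 / 2) := by
  refine ⟨2 * (1 + 1 / ε) * 2, by positivity, ?_⟩
  have key : ∀ (a b : ℕ) (X : ℝ), 0 < X → b ≤ a → X ≤ 2 * ((a : ℝ) + 1) →
      ∫ x, (hermiteFun a x * hermiteFun b x) ^ 2 ≤ 2 * (1 + 1 / ε) * 2 * X ^ (ε - 1 / 2) := by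
    intro a b X hX hab h
    refine (integral_hermiteFun_mul_sq_le hε hab).trans ?_
    rw [mul_assoc _ (2 : ℝ)]
    gcongr
    exact rpow_le_of_le_mul hX (by positivity) (by norm_num) h (by linarith) (by linarith)
  intro a b X hX h
  rcases le_total b a with hab | hab
  · have : (b : ℝ) ≤ a := by exact_mod_cast hab
    exact key a b X hX hab (by rcases h with h | h <;> linarith)
  · have : (a : ℝ) ≤ b := by exact_mod_cast hab
    simp_rw [mul_comm (hermiteFun a _)]
    exact key b a X hX hab (by rcases h with h | h <;> linarith)

lemma integral_mul_hermiteFunDeriv_sq_le {w : ℝ → ℝ} (hw : GaussianDecay w) (b : ℕ) :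
    ∫ x, (w x * hermiteFunDeriv b x) ^ 2 ≤ ((b : ℝ) + 1) *
      ((∫ x, (w x * hermiteFun (b - 1) x) ^ 2) + ∫ x, (w x * hermiteFun (b + 1) x) ^ 2) := by
  have d1 := (hw.mul (gaussianDecay_hermiteFun (b - 1))).sq
  have d2 := (hw.mul (gaussianDecay_hermiteFun (b + 1))).sq
  rw [← integral_add d1.integrable d2.integrable, ← integral_const_mul]
  refine integral_mono (hw.mul (gaussianDecay_hermiteFunDeriv b)).sq.integrable
    ((d1.add d2).const_mul _).integrable fun x => ?_
  simp only [hermiteFunDeriv]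
  have q1 : Real.sqrt ((b : ℝ) / 2) ^ 2 = b / 2 := Real.sq_sqrt (by positivity)
  have q2 : Real.sqrt (((b : ℝ) + 1) / 2) ^ 2 = (b + 1) / 2 := Real.sq_sqrt (by positivity)
  generalize Real.sqrt ((b : ℝ) / 2) = r1 at *
  generalize Real.sqrt (((b : ℝ) + 1) / 2) = r2 at *
  generalize hermiteFun (b - 1) x = p
  generalize hermiteFun (b + 1) x = q
  have e : (w x * (r1 * p - r2 * q)) ^ 2 + (w x * (r1 * p + r2 * q)) ^ 2 =
      b * (w x * p) ^ 2 + (b + 1) * (w x * q) ^ 2 := by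
    linear_combination 2 * (w x * p) ^ 2 * q1 + 2 * (w x * q) ^ 2 * q2
  nlinarith [sq_nonneg (w x * (r1 * p + r2 * q)), sq_nonneg (w x * p)]

/-- A one-dimensional Sobolev inequality. -/
lemma GaussianDecay.sq_le {u v : ℝ → ℝ} (hu : GaussianDecay u) (hv : GaussianDecay v)
    (h : ∀ x, HasDerivAt u (v x) x) {t : ℝ} (ht : 0 < t) (x : ℝ) :
    u x ^ 2 ≤ t * (∫ y, u y ^ 2) + t⁻¹ * ∫ y, v y ^ 2 := by
  have hd : ∀ y, HasDerivAt (fun y => u y ^ 2) (2 * (u y * v y)) y := fun y =>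
    ((h y).pow 2).congr_deriv (by norm_num; ring)
  have d1 := (hu.mul hv).const_mul 2
  have d2 := (hu.sq.const_mul t).add (hv.sq.const_mul t⁻¹)
  have h0 := tendsto_zero_of_hasDerivAt_of_integrableOn_Iic (a := x) (fun y _ => hd y)
    d1.integrable.integrableOn hu.sq.integrable.integrableOn
  have h1 := integral_Iic_of_hasDerivAt_of_tendsto' (a := x) (fun y _ => hd y)
    d1.integrable.integrableOn h0
  rw [sub_zero] at h1
  rw [← h1, ← integral_const_mul, ← integral_const_mul,
    ← integral_add (hu.sq.const_mul t).integrable (hv.sq.const_mul t⁻¹).integrable]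
  calc ∫ y in Iic x, 2 * (u y * v y) ≤ ∫ y in Iic x, (t * u y ^ 2 + t⁻¹ * v y ^ 2) := by
        refine setIntegral_mono d1.integrable.integrableOn d2.integrable.integrableOn fun y => ?_
        have e : t * u y ^ 2 + t⁻¹ * v y ^ 2 - 2 * (u y * v y) = t⁻¹ * (t * u y - v y) ^ 2 := by
          field_simp
          ring
        have : 0 ≤ t⁻¹ * (t * u y - v y) ^ 2 := by positivity
        linarith
    _ ≤ _ := setIntegral_le_integral d2.integrable
        (Eventually.of_forall fun y => by simp only [Pi.zero_apply]; positivity)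

/-- Uniform bound for Hermite functions, with a small loss. -/
lemma exists_hermiteFun_sq_le {ε : ℝ} (hε : 0 < ε) (hε' : ε ≤ 1 / 2) :
    ∃ K : ℝ, 0 < K ∧ ∀ (c : ℕ) (x : ℝ), hermiteFun c x ^ 2 ≤ K * ((c : ℝ) + 1) ^ ε := by
  obtain ⟨K, hK, hB⟩ := exists_integral_two_hermiteFun_le hε hε'
  refine ⟨1 + 9 * K, by positivity, fun c x => ?_⟩
  have hc := gaussianDecay_hermiteFun c
  set X : ℝ := (c : ℝ) + 1 with hX
  have hX0 : 0 < X := by positivity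
  have hX1 : 1 ≤ X := by simp [hX]
  have hd : ∀ y, HasDerivAt (fun y => hermiteFun c y ^ 2)
      (2 * (hermiteFun c y * hermiteFunDeriv c y)) y := fun y =>
    ((hasDerivAt_hermiteFunDeriv c y).pow 2).congr_deriv (by norm_num; ring)
  have h1 := hc.sq.sq_le ((hc.mul (gaussianDecay_hermiteFunDeriv c)).const_mul 2) hd
    (Real.sqrt_pos.mpr hX0) x
  have h2 := hB c c X hX0 (Or.inl (by linarith))
  have h3 := integral_mul_hermiteFunDeriv_sq_le hc c
  have h4 := hB c (c - 1) X hX0 (Or.inl (by linarith))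
  have h5 := hB c (c + 1) X hX0 (Or.inl (by linarith))
  simp_rw [← pow_two] at h2
  simp_rw [mul_pow (2 : ℝ), integral_const_mul] at h1
  set Z := X ^ (ε - 1 / 2) with hZ
  have hZε : Real.sqrt X * Z = X ^ ε := by
    rw [Real.sqrt_eq_rpow, hZ, ← Real.rpow_add hX0]
    ring_nf
  have hXs : (Real.sqrt X)⁻¹ * X = Real.sqrt X := by
    rw [inv_mul_eq_div, Real.div_sqrt]
  have h6 : ∫ y, (hermiteFun c y * hermiteFunDeriv c y) ^ 2 ≤ X * (2 * K * Z) := by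
    refine h3.trans ?_
    gcongr
    linarith
  have h7 : (hermiteFun c x ^ 2) ^ 2 ≤ 9 * K * X ^ ε := by
    calc (hermiteFun c x ^ 2) ^ 2 ≤ Real.sqrt X * (K * Z) +
          (Real.sqrt X)⁻¹ * (2 ^ 2 * (X * (2 * K * Z))) := by
            refine h1.trans ?_
            gcongr
      _ = Real.sqrt X * (K * Z) + (Real.sqrt X)⁻¹ * X * (8 * K * Z) := by ring
      _ = 9 * K * (Real.sqrt X * Z) := by
          rw [hXs]
          ring
      _ = _ := by rw [hZε]
  have h8 : 1 ≤ X ^ ε := Real.one_le_rpow hX1 hε.le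
  refine le_of_sq_le_sq ?_ (by positivity)
  refine h7.trans ?_
  rw [mul_pow]
  have h9 : X ^ ε ≤ (X ^ ε) ^ 2 := by nlinarith
  calc 9 * K * X ^ ε ≤ (1 + 9 * K) ^ 2 * X ^ ε := by
        gcongr
        nlinarith
    _ ≤ _ := by gcongr

/-- Trilinear `L²` bound. -/
lemma exists_integral_three_hermiteFun_le {ε : ℝ} (hε : 0 < ε) (hε' : ε ≤ 1 / 2) :
    ∃ K : ℝ, 0 < K ∧ ∀ (a b c : ℕ) (X : ℝ), 0 < X →
      (X ≤ 2 * ((a : ℝ) + 1) ∨ X ≤ 2 * ((b : ℝ) + 1) ∨ X ≤ 2 * ((c : ℝ) + 1)) →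
      (a : ℝ) + 1 ≤ 2 * X → (c : ℝ) + 1 ≤ 2 * X →
      ∫ x, (hermiteFun a x * hermiteFun b x * hermiteFun c x) ^ 2 ≤ K * X ^ (ε - 1 / 2) := by
  obtain ⟨K, hK, hB⟩ := exists_integral_two_hermiteFun_le (half_pos hε) (by linarith)
  obtain ⟨K', hK', hS⟩ := exists_hermiteFun_sq_le (half_pos hε) (by linarith)
  refine ⟨K' * 2 ^ (ε / 2) * K, by positivity, ?_⟩
  have key : ∀ (a b c : ℕ) (X : ℝ), 0 < X →
      (X ≤ 2 * ((a : ℝ) + 1) ∨ X ≤ 2 * ((b : ℝ) + 1)) → (c : ℝ) + 1 ≤ 2 * X →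
      ∫ x, (hermiteFun a x * hermiteFun b x * hermiteFun c x) ^ 2 ≤
        K' * 2 ^ (ε / 2) * K * X ^ (ε - 1 / 2) := by
    intro a b c X hX h hc
    have d := (gaussianDecay_hermiteFun a).mul (gaussianDecay_hermiteFun b)
    calc ∫ x, (hermiteFun a x * hermiteFun b x * hermiteFun c x) ^ 2
        ≤ ∫ x, K' * (2 * X) ^ (ε / 2) * (hermiteFun a x * hermiteFun b x) ^ 2 := by
          refine integral_mono (d.mul (gaussianDecay_hermiteFun c)).sq.integrable
            (d.sq.const_mul _).integrable fun x => ?_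
          simp only
          rw [mul_pow, mul_comm]
          gcongr
          refine (hS c x).trans ?_
          gcongr
      _ ≤ K' * (2 * X) ^ (ε / 2) * (K * X ^ (ε / 2 - 1 / 2)) := by
          rw [integral_const_mul]
          gcongr
          exact hB a b X hX h
      _ = _ := by
          rw [Real.mul_rpow (by norm_num) hX.le,
            show ε - 1 / 2 = ε / 2 + (ε / 2 - 1 / 2) by ring, Real.rpow_add hX]
          ring
  intro a b c X hX h ha hc
  rcases h with h | h | h
  · exact key a b c X hX (Or.inl h) hc
  · exact key a b c X hX (Or.inr h) hc
  · have := key b c a X hX (Or.inr h) ha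
    refine le_trans (le_of_eq ?_) this
    congr 1 with x
    ring

/-! ### One-dimensional Sobolev bounds -/

/-- Bounds for the `ℋ⁰` and `ℋ¹` norms of a function on `ℝ`, at frequency `X ^ (1/2)`. -/
def HermiteBound (K θ X : ℝ) (u : ℝ → ℝ) : Prop :=
  ∀ R : ℕ, ∑ k ∈ Finset.range R, hermiteCoef u k ^ 2 ≤ K * X ^ θ ∧
    ∑ k ∈ Finset.range R, (2 * k + 1) * hermiteCoef u k ^ 2 ≤ X * (K * X ^ θ)

lemma hermiteBound_of_integral_le {u v : ℝ → ℝ} (hu : GaussianDecay u) (hv : GaussianDecay v)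
    (h : ∀ x, HasDerivAt u (v x) x) {K θ X : ℝ} (hX : 1 ≤ X) (hK : 0 ≤ K)
    (h0 : ∫ x, u x ^ 2 ≤ K * X ^ θ) (h1 : ∫ x, (v x + x * u x) ^ 2 ≤ X * (K * X ^ θ)) :
    HermiteBound (2 * K) θ X u := by
  intro R
  have hp : 0 ≤ K * X ^ θ := by positivity
  have hs0 := sum_hermiteCoef_sq_le hu R
  have hs1 := sum_mul_hermiteCoef_sq_le hu hv h R
  constructor
  · linarith
  · nlinarith

lemma exists_hermiteBound_two {ε : ℝ} (hε : 0 < ε) (hε' : ε ≤ 1 / 2) :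
    ∃ K : ℝ, 0 < K ∧ ∀ a b : ℕ, HermiteBound K (ε - 1 / 2) (((max a b : ℕ) : ℝ) + 1)
      (fun x => hermiteFun a x * hermiteFun b x) := by
  obtain ⟨K, hK, hB⟩ := exists_integral_two_hermiteFun_le hε hε'
  refine ⟨2 * (8 * K), by positivity, fun a b => ?_⟩
  have ha := gaussianDecay_hermiteFun a
  have hb := gaussianDecay_hermiteFun b
  have ha' := gaussianDecay_hermiteFunDeriv a
  have hb' := gaussianDecay_hermiteFunDeriv b
  set X : ℝ := ((max a b : ℕ) : ℝ) + 1 with hX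
  have hX0 : 0 < X := by positivity
  have hX1 : 1 ≤ X := by simp [hX]
  have haX : (a : ℝ) + 1 ≤ X := by simp [hX]
  have hbX : (b : ℝ) + 1 ≤ X := by simp [hX]
  have hor : X = a + 1 ∨ X = b + 1 := by
    rcases max_choice a b with h | h <;> simp [hX, h]
  set Z := X ^ (ε - 1 / 2) with hZ
  have hZ0 : 0 < Z := by positivity
  have hpred : ∀ n : ℕ, (n : ℝ) + 1 ≤ 2 * (((n - 1 : ℕ) : ℝ) + 1) := fun n => by
    exact_mod_cast (show n + 1 ≤ 2 * (n - 1 + 1) by lia)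
  have na := hpred a
  have nb := hpred b
  have b0 := hB a b X hX0 (by rcases hor with h | h <;> [left; right] <;> linarith)
  have b1 := hB (a - 1) b X hX0 (by rcases hor with h | h <;> [left; right] <;> linarith)
  have b2 := hB a (b - 1) X hX0 (by rcases hor with h | h <;> [left; right] <;> linarith)
  have b3 := hB a (b + 1) X hX0
    (by rcases hor with h | h <;> [left; right] <;> push_cast <;> linarith)
  refine hermiteBound_of_integral_le (ha.mul hb) ((ha'.mul hb).add (ha.mul hb'))
    (fun x => (hasDerivAt_hermiteFunDeriv a x).mul (hasDerivAt_hermiteFunDeriv b x)) hX1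
    (by positivity) (b0.trans (by gcongr; linarith)) ?_
  have d1 := ((gaussianDecay_hermiteFun (a - 1)).mul hb).sq
  have d2 := (ha.mul hb').sq
  have b4 := integral_mul_hermiteFunDeriv_sq_le ha b
  calc ∫ x, (hermiteFunDeriv a x * hermiteFun b x + hermiteFun a x * hermiteFunDeriv b x
          + x * (hermiteFun a x * hermiteFun b x)) ^ 2
      ≤ ∫ x, (4 * a * (hermiteFun (a - 1) x * hermiteFun b x) ^ 2 +
          2 * (hermiteFun a x * hermiteFunDeriv b x) ^ 2) := by
        refine integral_mono
          (((ha'.mul hb).add (ha.mul hb')).add (ha.mul hb).id_mul).sq.integrable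
          ((d1.const_mul _).add (d2.const_mul _)).integrable fun x => ?_
        simp only
        rw [hermiteFunDeriv_eq a]
        have q : Real.sqrt (2 * (a : ℝ)) ^ 2 = 2 * a := Real.sq_sqrt (by positivity)
        generalize Real.sqrt (2 * (a : ℝ)) = r at *
        generalize hermiteFun (a - 1) x = p
        generalize hermiteFun a x = p0
        generalize hermiteFun b x = q0
        generalize hermiteFunDeriv b x = q'
        have e : 4 * a * (p * q0) ^ 2 = 2 * (r * p * q0) ^ 2 := by
          linear_combination (-2 * (p * q0) ^ 2) * q
        rw [e]
        nlinarith [sq_nonneg (r * p * q0 - p0 * q')]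
    _ = 4 * a * (∫ x, (hermiteFun (a - 1) x * hermiteFun b x) ^ 2) +
          2 * ∫ x, (hermiteFun a x * hermiteFunDeriv b x) ^ 2 := by
        rw [integral_add (d1.const_mul _).integrable (d2.const_mul _).integrable,
          integral_const_mul, integral_const_mul]
    _ ≤ 4 * X * (K * Z) + 2 * (X * (2 * (K * Z))) := by
        gcongr
        · linarith
        · refine b4.trans ?_
          gcongr
          linarith
    _ = _ := by ring

lemma exists_hermiteBound_three {ε : ℝ} (hε : 0 < ε) (hε' : ε ≤ 1 / 2) :
    ∃ K : ℝ, 0 < K ∧ ∀ a b c : ℕ,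
      HermiteBound K (ε - 1 / 2) (((max a (max b c) : ℕ) : ℝ) + 1)
        (fun x => hermiteFun a x * hermiteFun b x * hermiteFun c x) := by
  obtain ⟨K, hK, hB⟩ := exists_integral_three_hermiteFun_le hε hε'
  refine ⟨2 * (18 * K), by positivity, fun a b c => ?_⟩
  have ha := gaussianDecay_hermiteFun a
  have hb := gaussianDecay_hermiteFun b
  have hc := gaussianDecay_hermiteFun c
  have ha' := gaussianDecay_hermiteFunDeriv a
  have hb' := gaussianDecay_hermiteFunDeriv b
  have hc' := gaussianDecay_hermiteFunDeriv c
  set X : ℝ := ((max a (max b c) : ℕ) : ℝ) + 1 with hX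
  have hX0 : 0 < X := by positivity
  have hX1 : 1 ≤ X := by simp [hX]
  have haX : (a : ℝ) + 1 ≤ X := by simp [hX]
  have hbX : (b : ℝ) + 1 ≤ X := by simp [hX]
  have hcX : (c : ℝ) + 1 ≤ X := by simp [hX]
  have hor : X = a + 1 ∨ X = b + 1 ∨ X = c + 1 := by
    rcases max_choice a (max b c) with h | h
    · simp [hX, h]
    · rcases max_choice b c with h' | h' <;> rw [hX, h, h'] <;> simp
  set Z := X ^ (ε - 1 / 2) with hZ
  have hZ0 : 0 < Z := by positivity
  have hpred : ∀ n : ℕ, (n : ℝ) + 1 ≤ 2 * (((n - 1 : ℕ) : ℝ) + 1) := fun n => by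
    exact_mod_cast (show n + 1 ≤ 2 * (n - 1 + 1) by lia)
  have hpred' : ∀ n : ℕ, ((n - 1 : ℕ) : ℝ) ≤ n := fun n => by
    exact_mod_cast (show n - 1 ≤ n by lia)
  have na := hpred a
  have nb := hpred b
  have nc := hpred c
  have na' := hpred' a
  have nc' := hpred' c
  have b0 := hB a b c X hX0
    (by rcases hor with h | h | h <;> [left; (right; left); (right; right)] <;> linarith)
    (by linarith) (by linarith)
  have b1 := hB (a - 1) b c X hX0
    (by rcases hor with h | h | h <;> [left; (right; left); (right; right)] <;> linarith)
    (by linarith) (by linarith)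
  have b2 := hB a (b - 1) c X hX0
    (by rcases hor with h | h | h <;> [left; (right; left); (right; right)] <;> linarith)
    (by linarith) (by linarith)
  have b3 := hB a (b + 1) c X hX0
    (by rcases hor with h | h | h <;> [left; (right; left); (right; right)] <;> push_cast <;>
      linarith)
    (by linarith) (by linarith)
  have b4 := hB a b (c - 1) X hX0
    (by rcases hor with h | h | h <;> [left; (right; left); (right; right)] <;> linarith)
    (by linarith) (by linarith)
  have b5 := hB a b (c + 1) X hX0
    (by rcases hor with h | h | h <;> [left; (right; left); (right; right)] <;> push_cast <;>
      linarith)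
    (by linarith) (by push_cast; linarith)
  refine hermiteBound_of_integral_le ((ha.mul hb).mul hc)
    ((((ha'.mul hb).add (ha.mul hb')).mul hc).add ((ha.mul hb).mul hc'))
    (fun x => ((hasDerivAt_hermiteFunDeriv a x).mul (hasDerivAt_hermiteFunDeriv b x)).mul
      (hasDerivAt_hermiteFunDeriv c x)) hX1
    (by positivity) (b0.trans (by gcongr; linarith)) ?_
  have d1 := (((gaussianDecay_hermiteFun (a - 1)).mul hb).mul hc).sq
  have d2 := ((ha.mul hc).mul hb').sq
  have d3 := ((ha.mul hb).mul hc').sq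
  have b6 := integral_mul_hermiteFunDeriv_sq_le (ha.mul hc) b
  have b7 := integral_mul_hermiteFunDeriv_sq_le (ha.mul hb) c
  have b2' : ∫ x, (hermiteFun a x * hermiteFun c x * hermiteFun (b - 1) x) ^ 2 ≤ K * Z := by
    refine le_trans (le_of_eq ?_) b2
    congr 1 with x
    ring
  have b3' : ∫ x, (hermiteFun a x * hermiteFun c x * hermiteFun (b + 1) x) ^ 2 ≤ K * Z := by
    refine le_trans (le_of_eq ?_) b3
    congr 1 with x
    ring
  calc ∫ x, ((hermiteFunDeriv a x * hermiteFun b x + hermiteFun a x * hermiteFunDeriv b x) *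
            hermiteFun c x + hermiteFun a x * hermiteFun b x * hermiteFunDeriv c x
          + x * (hermiteFun a x * hermiteFun b x * hermiteFun c x)) ^ 2
      ≤ ∫ x, (6 * a * (hermiteFun (a - 1) x * hermiteFun b x * hermiteFun c x) ^ 2 +
          3 * (hermiteFun a x * hermiteFun c x * hermiteFunDeriv b x) ^ 2 +
          3 * (hermiteFun a x * hermiteFun b x * hermiteFunDeriv c x) ^ 2) := by
        refine integral_mono
          (((((ha'.mul hb).add (ha.mul hb')).mul hc).add ((ha.mul hb).mul hc')).add
            ((ha.mul hb).mul hc).id_mul).sq.integrable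
          (((d1.const_mul _).add (d2.const_mul _)).add (d3.const_mul _)).integrable fun x => ?_
        simp only
        rw [hermiteFunDeriv_eq a]
        have q : Real.sqrt (2 * (a : ℝ)) ^ 2 = 2 * a := Real.sq_sqrt (by positivity)
        generalize Real.sqrt (2 * (a : ℝ)) = r at *
        have e : 6 * a * (hermiteFun (a - 1) x * hermiteFun b x * hermiteFun c x) ^ 2 =
            3 * (r * hermiteFun (a - 1) x * hermiteFun b x * hermiteFun c x) ^ 2 := by
          linear_combination
            (-3 * (hermiteFun (a - 1) x * hermiteFun b x * hermiteFun c x) ^ 2) * q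
        rw [e]
        have e3 : ∀ p q s : ℝ, (p + q + s) ^ 2 ≤ 3 * p ^ 2 + 3 * q ^ 2 + 3 * s ^ 2 := by
          intro p q s
          nlinarith [sq_nonneg (p - q), sq_nonneg (p - s), sq_nonneg (q - s)]
        refine le_trans (le_of_eq ?_) (e3 _ _ _)
        ring
    _ = 6 * a * (∫ x, (hermiteFun (a - 1) x * hermiteFun b x * hermiteFun c x) ^ 2) +
          3 * (∫ x, (hermiteFun a x * hermiteFun c x * hermiteFunDeriv b x) ^ 2) +
          3 * ∫ x, (hermiteFun a x * hermiteFun b x * hermiteFunDeriv c x) ^ 2 := by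
        rw [integral_add ((d1.const_mul _).add (d2.const_mul _)).integrable
            (d3.const_mul _).integrable,
          integral_add (d1.const_mul _).integrable (d2.const_mul _).integrable,
          integral_const_mul, integral_const_mul, integral_const_mul]
    _ ≤ 6 * X * (K * Z) + 3 * (X * (2 * (K * Z))) + 3 * (X * (2 * (K * Z))) := by
        gcongr
        · linarith
        · refine b6.trans ?_
          gcongr
          linarith
        · refine b7.trans ?_
          gcongr
          linarith
    _ = _ := by ring

/-! ### Tensorization -/

lemma coef3_prod (u : Fin 3 → ℝ → ℝ) (k : Fin 3 → ℕ) :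
    coef3 (fun x => ((∏ i, u i (x i) : ℝ) : ℂ)) k = ((∏ i, hermiteCoef (u i) (k i) : ℝ) : ℂ) := by
  have e : ∀ x : Rd 3, (hermite3 k x : ℂ) * ((∏ i, u i (x i) : ℝ) : ℂ) =
      ((∏ i, (hermiteFun (k i) (x i) * u i (x i)) : ℝ) : ℂ) := by
    intro x
    rw [hermite3, ← Complex.ofReal_mul, Finset.prod_mul_distrib]
  simp only [coef3, e]
  rw [integral_complex_ofReal]
  congr 1
  rw [← (EuclideanSpace.volume_preserving_symm_measurableEquiv_toLp (Fin 3)).symm.integral_comp']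
  exact integral_fintype_prod_volume_eq_prod fun i y => hermiteFun (k i) y * u i y

lemma lam3_sq (k : Fin 3 → ℕ) : lam3 k ^ 2 = ∑ i, (2 * (k i : ℝ) + 1) := by
  rw [lam3, Real.sq_sqrt (by positivity), Finset.sum_add_distrib, Finset.mul_sum]
  simp

lemma one_le_lam3 (k : Fin 3 → ℕ) : 1 ≤ lam3 k := by
  rw [lam3, Real.one_le_sqrt]
  have : (0 : ℝ) ≤ ∑ i, (k i : ℝ) := by positivity
  linarith

lemma exists_subset_piFinset_range (F : Finset (Fin 3 → ℕ)) :
    ∃ R : ℕ, F ⊆ Fintype.piFinset fun _ => Finset.range R := by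
  refine ⟨F.sup (fun k => ∑ i, k i) + 1, fun k hk => ?_⟩
  rw [Fintype.mem_piFinset]
  intro i
  rw [Finset.mem_range, Nat.lt_succ_iff]
  exact (Finset.single_le_sum (f := k) (fun j _ => Nat.zero_le _) (Finset.mem_univ i)).trans
    (Finset.le_sup (f := fun k : Fin 3 → ℕ => ∑ i, k i) hk)

lemma rpow_le_interpolation {l L s : ℝ} (hl : 0 < l) (hL : 0 < L) (hs : s ∈ Set.Icc (0 : ℝ) 1) :
    l ^ (2 * s) ≤ L ^ (2 * s) * (1 + l ^ 2 / L ^ 2) := by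
  have h : (l / L) ^ (2 * s) ≤ 1 + (l / L) ^ 2 := by
    have hp : 0 < l / L := by positivity
    rcases le_total (l / L) 1 with h1 | h1
    · have := Real.rpow_le_one hp.le h1 (show 0 ≤ 2 * s by linarith [hs.1])
      nlinarith [sq_nonneg (l / L)]
    · have := Real.rpow_le_rpow_of_exponent_le h1 (show 2 * s ≤ (2 : ℕ) by
        push_cast
        linarith [hs.2])
      rw [Real.rpow_natCast] at this
      linarith
  rw [Real.div_rpow hl.le hL.le, div_le_iff₀ (by positivity), div_pow] at h
  linarith

lemma sum_prod_hermiteCoef_le {K θ : ℝ} (hθ : θ ≤ 0) (hK : 0 < K)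
    {u : Fin 3 → ℝ → ℝ} {X : Fin 3 → ℝ} (hX : ∀ i, 1 ≤ X i)
    (hu : ∀ i, HermiteBound K θ (X i) (u i)) (i₀ : Fin 3) (R : ℕ) :
    ∑ k ∈ Fintype.piFinset (fun _ : Fin 3 => Finset.range R),
      ∏ j, hermiteCoef (u j) (k j) ^ 2 ≤ K ^ 3 * X i₀ ^ θ ∧
    ∀ i, ∑ k ∈ Fintype.piFinset (fun _ : Fin 3 => Finset.range R),
      (2 * (k i : ℝ) + 1) * ∏ j, hermiteCoef (u j) (k j) ^ 2 ≤ X i * (K ^ 3 * X i₀ ^ θ) := by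
  have hX0 : ∀ i, 0 < X i := fun i => by linarith [hX i]
  have hprod : ∏ j, (K * X j ^ θ) ≤ K ^ 3 * X i₀ ^ θ := by
    rw [Finset.prod_mul_distrib, Finset.prod_const, Finset.card_univ, Fintype.card_fin]
    gcongr
    rw [← Finset.mul_prod_erase _ _ (Finset.mem_univ i₀)]
    refine mul_le_of_le_one_right (Real.rpow_nonneg (hX0 _).le _) ?_
    exact Finset.prod_le_one (fun j _ => Real.rpow_nonneg (hX0 _).le _)
      fun j _ => Real.rpow_le_one_of_one_le_of_nonpos (hX j) hθ
  constructor
  · rw [← Finset.prod_univ_sum (fun _ : Fin 3 => Finset.range R)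
      fun j (l : ℕ) => hermiteCoef (u j) l ^ 2]
    refine le_trans (Finset.prod_le_prod (fun j _ => ?_) fun j _ => (hu j R).1) hprod
    positivity
  · intro i
    have e : ∀ k : Fin 3 → ℕ, (2 * (k i : ℝ) + 1) * ∏ j, hermiteCoef (u j) (k j) ^ 2 =
        ∏ j, (if j = i then 2 * (k j : ℝ) + 1 else 1) * hermiteCoef (u j) (k j) ^ 2 := by
      intro k
      rw [Finset.prod_mul_distrib, Finset.prod_ite_eq' Finset.univ i fun j => 2 * (k j : ℝ) + 1]
      simp
    have e' : ∏ j, (if j = i then X j else 1) * (K * X j ^ θ) = X i * ∏ j, (K * X j ^ θ) := by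
      rw [Finset.prod_mul_distrib, Finset.prod_ite_eq' Finset.univ i X]
      simp
    simp_rw [e]
    rw [← Finset.prod_univ_sum (fun _ : Fin 3 => Finset.range R)
      fun j (l : ℕ) => (if j = i then 2 * (l : ℝ) + 1 else 1) * hermiteCoef (u j) l ^ 2]
    calc ∏ j, ∑ l ∈ Finset.range R,
          (if j = i then 2 * (l : ℝ) + 1 else 1) * hermiteCoef (u j) l ^ 2
        ≤ ∏ j, (if j = i then X j else 1) * (K * X j ^ θ) := by
          refine Finset.prod_le_prod (fun j _ => ?_) fun j _ => ?_
          · refine Finset.sum_nonneg fun l _ => ?_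
            split_ifs <;> positivity
          · split_ifs with h
            · exact (hu j R).2
            · simpa using (hu j R).1
      _ ≤ _ := by
          rw [e']
          exact mul_le_mul_of_nonneg_left hprod (hX0 i).le

lemma hs3Norm_prod_le {K ε s L : ℝ} (hε : 0 < ε) (hε' : ε ≤ 1 / 2) (hK : 0 < K)
    (hs : s ∈ Set.Icc (0 : ℝ) 1) (hL : 1 ≤ L) {u : Fin 3 → ℝ → ℝ} {X : Fin 3 → ℝ}
    (hX : ∀ i, 1 ≤ X i) (hXL : ∀ i, X i ≤ L ^ 2) (hLX : ∃ i, L ^ 2 ≤ 6 * X i)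
    (hu : ∀ i, HermiteBound K (ε - 1 / 2) (X i) (u i)) :
    hs3Norm s (fun x => ((∏ i, u i (x i) : ℝ) : ℂ)) ≤
      ENNReal.ofReal (Real.sqrt (24 * K ^ 3) * L ^ (s - 1 / 2 + ε)) := by
  obtain ⟨i₀, hi₀⟩ := hLX
  have hL0 : 0 < L := by linarith
  have hXi : X i₀ ^ (ε - 1 / 2) ≤ 6 * (L ^ 2) ^ (ε - 1 / 2) :=
    rpow_le_of_le_mul (by positivity) (by linarith [hX i₀]) (by norm_num) hi₀ (by linarith)
      (by linarith)
  have hsum : ∀ R : ℕ, ∑ k ∈ Fintype.piFinset (fun _ : Fin 3 => Finset.range R),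
      lam3 k ^ (2 * s) * ∏ j, hermiteCoef (u j) (k j) ^ 2 ≤
        24 * K ^ 3 * (L ^ (s - 1 / 2 + ε)) ^ 2 := by
    intro R
    obtain ⟨h0, h1⟩ := sum_prod_hermiteCoef_le (by linarith) hK hX hu i₀ R
    set B := K ^ 3 * X i₀ ^ (ε - 1 / 2) with hB
    have hB0 : 0 ≤ B := mul_nonneg (by positivity) (Real.rpow_nonneg (by linarith [hX i₀]) _)
    have hLB : L ^ (2 * s) * (4 * B) ≤ 24 * K ^ 3 * (L ^ (s - 1 / 2 + ε)) ^ 2 := by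
      calc L ^ (2 * s) * (4 * B) ≤
            L ^ (2 * s) * (4 * (K ^ 3 * (6 * (L ^ 2) ^ (ε - 1 / 2)))) := by
              gcongr
              exact mul_le_mul_of_nonneg_left hXi (by positivity)
        _ = 24 * K ^ 3 * (L ^ (2 * s) * (L ^ 2) ^ (ε - 1 / 2)) := by ring
        _ = _ := by
          rw [← Real.rpow_natCast L 2, ← Real.rpow_mul hL0.le, ← Real.rpow_add hL0,
            ← Real.rpow_natCast _ 2, ← Real.rpow_mul hL0.le]
          push_cast
          ring_nf
    refine le_trans ?_ hLB
    calc ∑ k ∈ Fintype.piFinset (fun _ : Fin 3 => Finset.range R),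
          lam3 k ^ (2 * s) * ∏ j, hermiteCoef (u j) (k j) ^ 2
        ≤ ∑ k ∈ Fintype.piFinset (fun _ : Fin 3 => Finset.range R),
          L ^ (2 * s) * (1 + lam3 k ^ 2 / L ^ 2) * ∏ j, hermiteCoef (u j) (k j) ^ 2 := by
          gcongr with k
          exact rpow_le_interpolation (by linarith [one_le_lam3 k]) hL0 hs
      _ = L ^ (2 * s) * (∑ k ∈ Fintype.piFinset (fun _ : Fin 3 => Finset.range R),
            ∏ j, hermiteCoef (u j) (k j) ^ 2 +
          (∑ i, ∑ k ∈ Fintype.piFinset (fun _ : Fin 3 => Finset.range R),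
            (2 * (k i : ℝ) + 1) * ∏ j, hermiteCoef (u j) (k j) ^ 2) / L ^ 2) := by
          rw [Finset.sum_comm, Finset.sum_div, ← Finset.sum_add_distrib, Finset.mul_sum]
          refine Finset.sum_congr rfl fun k _ => ?_
          rw [← Finset.sum_mul, ← lam3_sq]
          ring
      _ ≤ L ^ (2 * s) * (B + (∑ _i : Fin 3, L ^ 2 * B) / L ^ 2) := by
          gcongr with i
          exact (h1 i).trans (by gcongr; exact hXL i)
      _ = _ := by
          rw [Finset.sum_const, Finset.card_univ, Fintype.card_fin]
          field_simp
          ring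
  have htsum : ∑' k : Fin 3 → ℕ, ENNReal.ofReal
      (lam3 k ^ (2 * s) * ‖coef3 (fun x => ((∏ i, u i (x i) : ℝ) : ℂ)) k‖ ^ 2) ≤
        ENNReal.ofReal (24 * K ^ 3 * (L ^ (s - 1 / 2 + ε)) ^ 2) := by
    have hterm : ∀ k : Fin 3 → ℕ,
        lam3 k ^ (2 * s) * ‖coef3 (fun x => ((∏ i, u i (x i) : ℝ) : ℂ)) k‖ ^ 2 =
          lam3 k ^ (2 * s) * ∏ j, hermiteCoef (u j) (k j) ^ 2 := by
      intro k
      rw [coef3_prod, Complex.norm_real, Real.norm_eq_abs, sq_abs, Finset.prod_pow]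
    have hnn : ∀ k : Fin 3 → ℕ, 0 ≤ lam3 k ^ (2 * s) * ∏ j, hermiteCoef (u j) (k j) ^ 2 :=
      fun k => mul_nonneg (Real.rpow_nonneg (by linarith [one_le_lam3 k]) _) (by positivity)
    simp_rw [hterm]
    rw [ENNReal.tsum_eq_iSup_sum]
    refine iSup_le fun F => ?_
    rw [← ENNReal.ofReal_sum_of_nonneg fun k _ => hnn k]
    obtain ⟨R, hR⟩ := exists_subset_piFinset_range F
    exact ENNReal.ofReal_le_ofReal
      ((Finset.sum_le_sum_of_subset_of_nonneg hR fun k _ _ => hnn k).trans (hsum R))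
  refine (ENNReal.rpow_le_rpow htsum (by norm_num)).trans_eq ?_
  rw [ENNReal.ofReal_rpow_of_nonneg (by positivity) (by norm_num), ← Real.sqrt_eq_rpow,
    Real.sqrt_mul (by positivity), Real.sqrt_sq (by positivity)]

lemma lam3_sq_le {n : Fin 3 → ℕ} {Y : Fin 3 → ℝ} (h : ∀ i, (n i : ℝ) + 1 ≤ Y i) :
    ∃ i, lam3 n ^ 2 ≤ 6 * Y i := by
  by_contra! hc
  have hs := lam3_sq n
  rw [Fin.sum_univ_three] at hs
  have h0 := hc 0
  have h1 := hc 1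
  have h2 := hc 2
  linarith [h 0, h 1, h 2]

lemma add_one_le_lam3_sq (n : Fin 3 → ℕ) (i : Fin 3) : (n i : ℝ) + 1 ≤ lam3 n ^ 2 := by
  rw [lam3_sq]
  have h := Finset.single_le_sum (f := fun j => 2 * (n j : ℝ) + 1) (fun j _ => by positivity)
    (Finset.mem_univ i)
  have : (0 : ℝ) ≤ n i := by positivity
  linarith

/-- Bilinear and trilinear bounds for products of Hermite functions: for
`δ > 0`, `s ∈ [0,1]` there is `C > 0` with `‖h_n h_m‖_{ℋ^s(ℝ³)} ≤ C max(λ_n,λ_m)^{s-1/2+δ}` and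
`‖h_n h_m h_k‖_{ℋ^s(ℝ³)} ≤ C max(λ_n,λ_m,λ_k)^{s-1/2+δ}`. -/
theorem statement_10 (δ : ℝ) (hδ : 0 < δ) (s : ℝ) (hs : s ∈ Set.Icc (0 : ℝ) 1) :
    ∃ C : ℝ, 0 < C ∧ ∀ n m k : Fin 3 → ℕ,
      hs3Norm s (fun x => (hermite3 n x : ℂ) * (hermite3 m x : ℂ)) ≤
        ENNReal.ofReal (C * max (lam3 n) (lam3 m) ^ (s - 1/2 + δ)) ∧
      hs3Norm s (fun x => (hermite3 n x : ℂ) * (hermite3 m x : ℂ) * (hermite3 k x : ℂ)) ≤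
        ENNReal.ofReal (C * max (lam3 n) (max (lam3 m) (lam3 k)) ^ (s - 1/2 + δ)) := by
  have hε : 0 < min δ (1 / 2) := lt_min hδ (by norm_num)
  have hε' : min δ (1 / 2) ≤ 1 / 2 := min_le_right _ _
  obtain ⟨K₂, hK₂, h₂⟩ := exists_hermiteBound_two hε hε'
  obtain ⟨K₃, hK₃, h₃⟩ := exists_hermiteBound_three hε hε'
  have hmono : ∀ {L c d : ℝ}, 1 ≤ L → 0 ≤ d → c ≤ d →
      ENNReal.ofReal (c * L ^ (s - 1 / 2 + min δ (1 / 2))) ≤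
        ENNReal.ofReal (d * L ^ (s - 1 / 2 + δ)) := by
    intro L c d hL hd hcd
    have hL0 : 0 < L := by linarith
    refine ENNReal.ofReal_le_ofReal ?_
    gcongr
    exact min_le_left _ _
  have hsq : ∀ {a b : ℝ}, 1 ≤ a → a ≤ b → a ^ 2 ≤ b ^ 2 := fun ha hab => by gcongr
  refine ⟨Real.sqrt (24 * K₂ ^ 3) + Real.sqrt (24 * K₃ ^ 3), by positivity, fun n m k => ⟨?_, ?_⟩⟩
  · set L := max (lam3 n) (lam3 m) with hLdef
    have hn : lam3 n ≤ L := le_max_left _ _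
    have hm : lam3 m ≤ L := le_max_right _ _
    have hL : 1 ≤ L := (one_le_lam3 n).trans hn
    have hn' := fun i => (add_one_le_lam3_sq n i).trans (hsq (one_le_lam3 n) hn)
    have hm' := fun i => (add_one_le_lam3_sq m i).trans (hsq (one_le_lam3 m) hm)
    have key := hs3Norm_prod_le hε hε' hK₂ hs hL
      (X := fun i => ((max (n i) (m i) : ℕ) : ℝ) + 1)
      (u := fun i x => hermiteFun (n i) x * hermiteFun (m i) x) (fun i => by simp)
      (fun i => by
        rcases max_choice (n i) (m i) with h | h <;> simp only [h]
        exacts [hn' i, hm' i])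
      (by
        rcases max_choice (lam3 n) (lam3 m) with h | h <;> rw [hLdef, h] <;>
        exact lam3_sq_le fun i => by simp)
      fun i => h₂ (n i) (m i)
    refine le_trans (le_of_eq ?_) (key.trans (hmono hL (by positivity)
      (le_add_of_nonneg_right (Real.sqrt_nonneg _))))
    congr 1
    funext x
    simp only [hermite3, ← Complex.ofReal_mul, Finset.prod_mul_distrib]
  · set L := max (lam3 n) (max (lam3 m) (lam3 k)) with hLdef
    have hn : lam3 n ≤ L := le_max_left _ _
    have hm : lam3 m ≤ L := (le_max_left _ _).trans (le_max_right _ _)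
    have hk : lam3 k ≤ L := (le_max_right _ _).trans (le_max_right _ _)
    have hL : 1 ≤ L := (one_le_lam3 n).trans hn
    have hn' := fun i => (add_one_le_lam3_sq n i).trans (hsq (one_le_lam3 n) hn)
    have hm' := fun i => (add_one_le_lam3_sq m i).trans (hsq (one_le_lam3 m) hm)
    have hk' := fun i => (add_one_le_lam3_sq k i).trans (hsq (one_le_lam3 k) hk)
    have key := hs3Norm_prod_le hε hε' hK₃ hs hL
      (X := fun i => ((max (n i) (max (m i) (k i)) : ℕ) : ℝ) + 1)
      (u := fun i x => hermiteFun (n i) x * hermiteFun (m i) x * hermiteFun (k i) x)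
      (fun i => by simp)
      (fun i => by
        rcases max_choice (n i) (max (m i) (k i)) with h | h
        · rw [h]
          exact hn' i
        · rcases max_choice (m i) (k i) with h' | h' <;> rw [h, h']
          exacts [hm' i, hk' i])
      (by
        rcases max_choice (lam3 n) (max (lam3 m) (lam3 k)) with h | h
        · rw [hLdef, h]
          exact lam3_sq_le fun i => by simp
        · rcases max_choice (lam3 m) (lam3 k) with h' | h' <;> rw [hLdef, h, h'] <;>
          exact lam3_sq_le fun i => by simp)
      fun i => h₃ (n i) (m i) (k i)
    refine le_trans (le_of_eq ?_) (key.trans (hmono hL (by positivity)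
      (le_add_of_nonneg_left (Real.sqrt_nonneg _))))
    congr 1
    funext x
    simp only [hermite3, ← Complex.ofReal_mul, Finset.prod_mul_distrib]

end
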